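/- arXiv:0908.0546 — 7 statements merged into one kernel-verified Lean document; each statement's English description precedes it below -/
import Mathlib

section
/- Let D ⊆ ℝ^d (d ≥ 2) be a bounded open set, δ(x) = dist(x, ∂D), and let f : D → ℝ be differentiable with f⁰ = f − (1/|D|)∫_D f. Let β, γ > 0 and ψ(p) = (p−1)^{−β}(d−p)^{−γ} for p ∈ (1,d). Suppose that for every p ∈ (1,d) the Poincaré inequality |f⁰/δ|_{p,D} ≤ C(D) · (p/(d−p)) · | |grad f| |_{p,D} holds, and suppose sup_{p∈(1,d)} | |grad f| |_{p,D}/ψ(p) < ∞. Then sup_{p∈(1,d)} |f⁰/δ|_{p,D} / ((p−1)^{−β}(d−p)^{−γ−1}) < ∞; i.e., f⁰/δ belongs to the Bilateral Grand Lebesgue Space G(1,d; β, γ+1). -/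
open MeasureTheory Set ENNReal

/-- The `L^p` norm of `f` over a set `E ⊆ ℝ^d` with respect to Lebesgue measure:
`|f|_{p,E} = (∫_E |f(x)|^p dx)^{1/p}`. -/
noncomputable def LpNormOn {d : ℕ} (p : ℝ) (E : Set (EuclideanSpace ℝ (Fin d)))
    (f : EuclideanSpace ℝ (Fin d) → ℝ) : ℝ≥0∞ :=
  (∫⁻ x in E, ENNReal.ofReal (|f x| ^ p)) ^ (1 / p)

/-- Example 1 (bounded case): let `D ⊆ ℝ^d` (`d ≥ 2`) be a bounded open set,
`δ(x) = dist(x, ∂D)`, `f` differentiable, `f⁰ = f − (1/|D|)∫_D f`, and `β, γ > 0`.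
If the Poincaré inequality `|f⁰/δ|_p ≤ C·(p/(d−p))·| |grad f| |_p` holds for all
`p ∈ (1,d)` and `|grad f| ∈ G(1,d;β,γ)`, i.e.
`sup_{p∈(1,d)} | |grad f| |_p/((p−1)^{−β}(d−p)^{−γ}) < ∞`, then
`f⁰/δ ∈ G(1,d;β,γ+1)`, i.e.
`sup_{p∈(1,d)} |f⁰/δ|_p/((p−1)^{−β}(d−p)^{−γ−1}) < ∞`. -/
theorem bgls_poincare_bounded (d : ℕ) (hd : 2 ≤ d)
    (D : Set (EuclideanSpace ℝ (Fin d))) (hDo : IsOpen D) (hDb : Bornology.IsBounded D)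
    (f : EuclideanSpace ℝ (Fin d) → ℝ) (hf : Differentiable ℝ f)
    (β γ : ℝ) (hβ : 0 < β) (hγ : 0 < γ)
    (C : ℝ) (hC : 0 < C)
    (hPoin : ∀ p ∈ Ioo (1 : ℝ) (d : ℝ),
      LpNormOn p D (fun x =>
          (f x - (∫ y in D, f y) / (volume D).toReal) / Metric.infDist x (frontier D))
        ≤ ENNReal.ofReal (C * (p / ((d : ℝ) - p))) *
            LpNormOn p D (fun x => ‖fderiv ℝ f x‖))
    (hG : (⨆ p ∈ Ioo (1 : ℝ) (d : ℝ),
        LpNormOn p D (fun x => ‖fderiv ℝ f x‖) /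
          ENNReal.ofReal ((p - 1) ^ (-β) * ((d : ℝ) - p) ^ (-γ))) < ⊤) :
    (⨆ p ∈ Ioo (1 : ℝ) (d : ℝ),
        LpNormOn p D (fun x =>
            (f x - (∫ y in D, f y) / (volume D).toReal) / Metric.infDist x (frontier D)) /
          ENNReal.ofReal ((p - 1) ^ (-β) * ((d : ℝ) - p) ^ (-γ - 1))) < ⊤ := by
  set S := (⨆ p ∈ Ioo (1 : ℝ) (d : ℝ),
        LpNormOn p D (fun x => ‖fderiv ℝ f x‖) /
          ENNReal.ofReal ((p - 1) ^ (-β) * ((d : ℝ) - p) ^ (-γ))) with hS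
  refine lt_of_le_of_lt (b := ENNReal.ofReal (C * d) * S) ?_
    (ENNReal.mul_lt_top ENNReal.ofReal_lt_top hG)
  refine iSup₂_le fun p hp => ?_
  have h1 : 0 < p - 1 := sub_pos.2 hp.1
  have h2 : 0 < (d : ℝ) - p := sub_pos.2 hp.2
  have hp0 : 0 < p := by linarith
  have hψ : 0 < (p - 1) ^ (-β) * ((d : ℝ) - p) ^ (-γ) := by positivity
  have hψ' : 0 < (p - 1) ^ (-β) * ((d : ℝ) - p) ^ (-γ - 1) := by positivity
  have hle : LpNormOn p D (fun x => ‖fderiv ℝ f x‖) /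
          ENNReal.ofReal ((p - 1) ^ (-β) * ((d : ℝ) - p) ^ (-γ)) ≤ S :=
    le_iSup₂ (f := fun (p : ℝ) (_ : p ∈ Ioo (1 : ℝ) (d : ℝ)) =>
      LpNormOn p D (fun x => ‖fderiv ℝ f x‖) /
          ENNReal.ofReal ((p - 1) ^ (-β) * ((d : ℝ) - p) ^ (-γ))) p hp
  have hg := (ENNReal.div_le_iff (ENNReal.ofReal_pos.2 hψ).ne' ENNReal.ofReal_ne_top).1 hle
  rw [ENNReal.div_le_iff (ENNReal.ofReal_pos.2 hψ').ne' ENNReal.ofReal_ne_top]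
  refine (hPoin p hp).trans ((mul_le_mul_right hg _).trans ?_)
  have key : ENNReal.ofReal (C * (p / ((d : ℝ) - p))) *
        ENNReal.ofReal ((p - 1) ^ (-β) * ((d : ℝ) - p) ^ (-γ)) ≤
      ENNReal.ofReal (C * d) *
        ENNReal.ofReal ((p - 1) ^ (-β) * ((d : ℝ) - p) ^ (-γ - 1)) := by
    rw [← ENNReal.ofReal_mul (by positivity), ← ENNReal.ofReal_mul (by positivity)]
    apply ENNReal.ofReal_le_ofReal
    have e : C * (p / ((d : ℝ) - p)) * ((p - 1) ^ (-β) * ((d : ℝ) - p) ^ (-γ)) =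
        C * p * ((p - 1) ^ (-β) * ((d : ℝ) - p) ^ (-γ - 1)) := by
      rw [Real.rpow_sub_one h2.ne']
      ring
    rw [e]
    exact mul_le_mul_of_nonneg_right (mul_le_mul_of_nonneg_left hp.2.le hC.le) hψ'.le
  calc _ = S * (ENNReal.ofReal (C * (p / ((d : ℝ) - p))) *
        ENNReal.ofReal ((p - 1) ^ (-β) * ((d : ℝ) - p) ^ (-γ))) := by ring
    _ ≤ S * (ENNReal.ofReal (C * d) *
        ENNReal.ofReal ((p - 1) ^ (-β) * ((d : ℝ) - p) ^ (-γ - 1))) := by gcongr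
    _ = _ := by ring
end

section
/- Let d ≥ 2, α > −1 with p₀ := d/(1+α) > 1, and Δ > 1. Define u(x) = (−log|x|)^Δ for x ∈ ℝ^d with 0 < |x| < 1/e. Then |grad u(x)| = Δ(−log|x|)^{Δ−1}/|x|, and there exist constants 0 < c₁ ≤ c₂ < ∞ (depending only on d, α, Δ) such that for all p ∈ (1, p₀): c₁ · (d − p(1+α))^{−(Δ−1) − 1/p} ≤ ( ∫_{|x|<1/e} ( |grad u(x)| · |x|^{−α} )^p dx )^{1/p} ≤ c₂ · (d − p(1+α))^{−(Δ−1) − 1/p}. -/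
open MeasureTheory Set ENNReal

lemma aux_grad (d : ℕ) (hd : 2 ≤ d) (Δ : ℝ) (hΔ : 1 < Δ)
    (x : EuclideanSpace ℝ (Fin d)) (h0 : 0 < ‖x‖) (h1 : ‖x‖ < 1 / Real.exp 1) :
    ‖fderiv ℝ (fun y : EuclideanSpace ℝ (Fin d) => (-Real.log ‖y‖) ^ Δ) x‖
        = Δ * (-Real.log ‖x‖) ^ (Δ - 1) / ‖x‖ := by
  have : Nonempty (Fin d) := ⟨⟨0, by omega⟩⟩
  have hlt1 : ‖x‖ < 1 := h1.trans_le (by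
    rw [div_le_one (Real.exp_pos 1)]; exact Real.one_le_exp zero_le_one)
  have hlog : 0 < -Real.log ‖x‖ := by
    have := Real.log_neg h0 hlt1
    linarith
  have hx : x ≠ 0 := norm_pos_iff.mp h0
  have hdiff : DifferentiableAt ℝ (fun y : EuclideanSpace ℝ (Fin d) => ‖y‖) x :=
    differentiableAt_id.norm ℝ hx
  have hder : HasDerivAt (fun r : ℝ => (-Real.log r) ^ Δ)
      (-(‖x‖)⁻¹ * Δ * (-Real.log ‖x‖) ^ (Δ - 1)) ‖x‖ :=
    (Real.hasDerivAt_log h0.ne').neg.rpow_const (Or.inl hlog.ne')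
  have hc := (HasDerivAt.comp_hasFDerivAt x hder hdiff.hasFDerivAt).fderiv
  have hc' : fderiv ℝ (fun y : EuclideanSpace ℝ (Fin d) => (-Real.log ‖y‖) ^ Δ) x
    = (-(‖x‖)⁻¹ * Δ * (-Real.log ‖x‖) ^ (Δ - 1)) •
      fderiv ℝ (fun y : EuclideanSpace ℝ (Fin d) => ‖y‖) x := hc
  rw [hc', norm_smul, norm_fderiv_norm hdiff, Real.norm_eq_abs, mul_one]
  have hp : 0 < (-Real.log ‖x‖) ^ (Δ - 1) := Real.rpow_pos_of_pos hlog _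
  have hneg : -(‖x‖)⁻¹ * Δ * (-Real.log ‖x‖) ^ (Δ - 1)
      = -(Δ * (-Real.log ‖x‖) ^ (Δ - 1) / ‖x‖) := by
    field_simp
  rw [hneg, abs_neg, abs_of_nonneg]
  positivity

lemma aux_point (d : ℕ) (hd : 2 ≤ d) (α Δ p ε w : ℝ) (hΔ : 1 < Δ)
    (hε : ε = (d : ℝ) - p * (1 + α)) (hw : 0 < w) :
    Real.exp (-w) * ((Real.exp (-w)) ^ (d - 1) *
      (Δ * (-Real.log (Real.exp (-w))) ^ (Δ - 1) / Real.exp (-w) * Real.exp (-w) ^ (-α)) ^ p)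
      = Δ ^ p * (Real.exp (-(ε * w)) * w ^ ((Δ - 1) * p)) := by
  have hΔ0 : 0 < Δ := by linarith
  have hwp : 0 < w ^ (Δ - 1) := Real.rpow_pos_of_pos hw _
  have e1 : Δ * (-Real.log (Real.exp (-w))) ^ (Δ - 1) / Real.exp (-w) * Real.exp (-w) ^ (-α)
      = Δ * w ^ (Δ - 1) * Real.exp ((1 + α) * w) := by
    rw [Real.log_exp, neg_neg, ← Real.exp_mul, div_eq_mul_inv, ← Real.exp_neg, mul_assoc,
      ← Real.exp_add]
    congr 2; ring
  rw [e1, Real.mul_rpow (by positivity) (by positivity), Real.mul_rpow hΔ0.le hwp.le,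
    ← Real.rpow_mul hw.le, ← Real.exp_mul, ← Real.exp_nat_mul]
  have hc : ((d - 1 : ℕ) : ℝ) = (d : ℝ) - 1 := by
    rw [Nat.cast_sub (by omega)]; simp
  have e2 : Real.exp (-(ε * w)) = Real.exp (-w) * Real.exp (((d - 1 : ℕ) : ℝ) * -w) *
      Real.exp ((1 + α) * w * p) := by
    rw [← Real.exp_add, ← Real.exp_add, hc, hε]
    congr 1; ring
  rw [e2]; ring

lemma aux_one_dim (d : ℕ) (hd : 2 ≤ d) (α Δ p ε : ℝ) (hΔ : 1 < Δ) (hp : 1 < p)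
    (hε : ε = (d : ℝ) - p * (1 + α)) (hε0 : 0 < ε) :
    IntegrableOn (fun r : ℝ => r ^ (d - 1) *
      (Δ * (-Real.log r) ^ (Δ - 1) / r * r ^ (-α)) ^ p) (Ioo 0 (1 / Real.exp 1)) ∧
    ∫ r in Ioo 0 (1 / Real.exp 1), r ^ (d - 1) *
      (Δ * (-Real.log r) ^ (Δ - 1) / r * r ^ (-α)) ^ p
      = Δ ^ p * ε ^ (-((Δ - 1) * p) - 1) *
        ∫ v in Ioi ε, Real.exp (-v) * v ^ ((Δ - 1) * p) := by
  set s := (Δ - 1) * p with hs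
  have hs0 : 0 < s := mul_pos (by linarith) (by linarith)
  have himg : (fun v : ℝ => Real.exp (-(v / ε))) '' (Ioi ε) = Ioo 0 (1 / Real.exp 1) := by
    ext r
    simp only [mem_image, mem_Ioi, mem_Ioo]
    constructor
    · rintro ⟨v, hv, rfl⟩
      refine ⟨Real.exp_pos _, ?_⟩
      rw [one_div, ← Real.exp_neg]
      apply Real.exp_lt_exp.mpr
      have : 1 < v / ε := (one_lt_div hε0).mpr hv
      linarith
    · rintro ⟨h0, h1⟩
      refine ⟨-(ε * Real.log r), ?_, ?_⟩
      · rw [one_div, ← Real.exp_neg] at h1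
        have := (Real.log_lt_iff_lt_exp h0).mpr h1
        nlinarith
      · have : -(-(ε * Real.log r) / ε) = Real.log r := by field_simp
        rw [this, Real.exp_log h0]
  have hinj : InjOn (fun v : ℝ => Real.exp (-(v / ε))) (Ioi ε) := by
    intro a _ b _ hab
    have h1 := Real.exp_injective hab
    have h2 : a / ε = b / ε := by linarith
    field_simp at h2
    exact h2
  have hder : ∀ v ∈ Ioi ε, HasDerivWithinAt (fun v : ℝ => Real.exp (-(v / ε)))
      (Real.exp (-(v / ε)) * (-(1 / ε))) (Ioi ε) v := by
    intro v _
    exact (((hasDerivAt_id v).div_const ε).neg.exp).hasDerivWithinAt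
  have hpt : ∀ v ∈ Ioi ε, |Real.exp (-(v / ε)) * (-(1 / ε))| •
      ((Real.exp (-(v / ε))) ^ (d - 1) *
      (Δ * (-Real.log (Real.exp (-(v / ε)))) ^ (Δ - 1) / Real.exp (-(v / ε))
        * Real.exp (-(v / ε)) ^ (-α)) ^ p)
      = Δ ^ p * ε ^ (-s - 1) * (Real.exp (-v) * v ^ s) := by
    intro v hv
    have hv0 : 0 < v := hε0.trans hv
    have hw : 0 < v / ε := by positivity
    have ha : |Real.exp (-(v / ε)) * (-(1 / ε))| = ε⁻¹ * Real.exp (-(v / ε)) := by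
      rw [abs_mul, abs_neg, abs_of_pos (Real.exp_pos _), abs_of_pos (by positivity), one_div,
        mul_comm]
    rw [ha, smul_eq_mul, mul_assoc, aux_point d hd α Δ p ε (v / ε) hΔ hε hw, ← hs,
      Real.div_rpow hv0.le hε0.le, mul_div_cancel₀ _ hε0.ne', Real.rpow_sub hε0, Real.rpow_neg hε0.le,
      Real.rpow_one]
    field_simp
  have hGint : IntegrableOn (fun v : ℝ => Real.exp (-v) * v ^ s) (Ioi ε) := by
    have := Real.GammaIntegral_convergent (s := s + 1) (by linarith)
    simp only [add_sub_cancel_right] at this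
    exact this.mono_set (Ioi_subset_Ioi hε0.le)
  constructor
  · rw [← himg, integrableOn_image_iff_integrableOn_abs_deriv_smul measurableSet_Ioi hder hinj,
      integrableOn_congr_fun hpt measurableSet_Ioi]
    exact hGint.const_mul _
  · rw [← himg, integral_image_eq_integral_abs_deriv_smul measurableSet_Ioi hder hinj,
      setIntegral_congr_fun measurableSet_Ioi hpt, integral_const_mul]

lemma aux_J (ε s S D : ℝ) (hε : 0 < ε) (hD : 1 ≤ D) (hεD : ε ≤ D) (hs : 0 < s) (hS : s ≤ S) :
    Real.exp (-D) ≤ ∫ v in Ioi ε, Real.exp (-v) * v ^ s ∧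
    ∫ v in Ioi ε, Real.exp (-v) * v ^ s ≤ 1 + Real.Gamma (S + 1) := by
  have hG : ∀ t : ℝ, 0 < t → IntegrableOn (fun v : ℝ => Real.exp (-v) * v ^ t) (Ioi 0) := by
    intro t ht
    have := Real.GammaIntegral_convergent (s := t + 1) (by linarith)
    simpa only [add_sub_cancel_right] using this
  have hnn : ∀ c : ℝ, 0 ≤ c →
      0 ≤ᵐ[volume.restrict (Ioi c)] (fun v : ℝ => Real.exp (-v) * v ^ s) := by
    intro c hc
    filter_upwards [ae_restrict_mem measurableSet_Ioi] with v hv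
    have : 0 < v := hc.trans_lt hv
    show 0 ≤ Real.exp (-v) * v ^ s
    positivity
  constructor
  · calc Real.exp (-D) = ∫ v in Ioi D, Real.exp (-v) := (integral_exp_neg_Ioi D).symm
      _ ≤ ∫ v in Ioi D, Real.exp (-v) * v ^ s := by
        apply setIntegral_mono_on (integrableOn_exp_neg_Ioi D)
          ((hG s hs).mono_set (Ioi_subset_Ioi (by linarith))) measurableSet_Ioi
        intro v hv
        have hv1 : 1 ≤ v := hD.trans (le_of_lt hv)
        exact le_mul_of_one_le_right (Real.exp_pos _).le (Real.one_le_rpow hv1 hs.le)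
      _ ≤ _ := setIntegral_mono_set ((hG s hs).mono_set (Ioi_subset_Ioi hε.le)) (hnn ε hε.le)
          (Ioi_subset_Ioi hεD).eventuallyLE
  · have hS0 : 0 < S := hs.trans_le hS
    calc ∫ v in Ioi ε, Real.exp (-v) * v ^ s ≤ ∫ v in Ioi 0, Real.exp (-v) * v ^ s :=
          setIntegral_mono_set (hG s hs) (hnn 0 le_rfl) (Ioi_subset_Ioi hε.le).eventuallyLE
      _ ≤ ∫ v in Ioi 0, (Real.exp (-v) + Real.exp (-v) * v ^ S) := by
        apply setIntegral_mono_on (hG s hs) ((integrableOn_exp_neg_Ioi 0).add (hG S hS0))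
          measurableSet_Ioi
        intro v hv
        have hv0 : (0 : ℝ) < v := hv
        have : v ^ s ≤ 1 + v ^ S := by
          have hvS : 0 < v ^ S := Real.rpow_pos_of_pos hv0 _
          rcases le_total v 1 with h | h
          · have := Real.rpow_le_one hv0.le h hs.le
            linarith
          · have := Real.rpow_le_rpow_of_exponent_le h hS
            linarith
        calc _ ≤ Real.exp (-v) * (1 + v ^ S) := by gcongr
          _ = _ := by simp only [Pi.add_apply]; ring
      _ = 1 + Real.Gamma (S + 1) := by
        rw [integral_add (integrableOn_exp_neg_Ioi 0) (hG S hS0), integral_exp_neg_Ioi_zero,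
          Real.Gamma_eq_integral (by linarith)]
        simp only [add_sub_cancel_right]

lemma aux_polar (d : ℕ) (hd : 2 ≤ d) (f : ℝ → ℝ) (R : ℝ)
    (hf : ∀ r ∈ Ioo 0 R, 0 ≤ f r)
    (hint : IntegrableOn (fun r : ℝ => r ^ (d - 1) * f r) (Ioo 0 R)) :
    ∫⁻ x in {x : EuclideanSpace ℝ (Fin d) | ‖x‖ < R}, ENNReal.ofReal (f ‖x‖)
      = ENNReal.ofReal ((d * volume.real (Metric.ball (0 : EuclideanSpace ℝ (Fin d)) 1)) *
        ∫ r in Ioo 0 R, r ^ (d - 1) * f r) := by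
  have : Nonempty (Fin d) := ⟨⟨0, by omega⟩⟩
  have hball : {x : EuclideanSpace ℝ (Fin d) | ‖x‖ < R} = Metric.ball 0 R := by
    ext x; simp
  have hne : ∀ᵐ x : EuclideanSpace ℝ (Fin d), x ≠ 0 := by
    rw [ae_iff]; simp
  have hI : IntegrableOn (fun x : EuclideanSpace ℝ (Fin d) => f ‖x‖) (Metric.ball 0 R) := by
    rw [integrableOn_fun_norm_addHaar]
    simpa using hint
  rw [hball, ← ofReal_integral_eq_lintegral_ofReal hI]
  · congr 1
    rw [← integral_indicator Metric.isOpen_ball.measurableSet]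
    have h1 : (Metric.ball (0 : EuclideanSpace ℝ (Fin d)) R).indicator (fun x => f ‖x‖)
        = fun x => (Iio R).indicator f ‖x‖ := by
      ext x; simp [indicator]
    rw [h1, integral_fun_norm_addHaar]
    simp only [finrank_euclideanSpace, Fintype.card_fin, nsmul_eq_mul, smul_eq_mul]
    rw [mul_assoc]
    congr 2
    have h2 : (fun y : ℝ => y ^ (d - 1) * (Iio R).indicator f y)
        = (Iio R).indicator (fun y => y ^ (d - 1) * f y) := by
      ext y; by_cases h : y < R <;> simp [h]
    rw [h2, setIntegral_indicator measurableSet_Iio, Ioi_inter_Iio]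
  · filter_upwards [ae_restrict_mem Metric.isOpen_ball.measurableSet, ae_restrict_of_ae hne]
      with x hx hx0
    exact hf _ ⟨norm_pos_iff.mpr hx0, by simpa using hx⟩

lemma aux_formula (d : ℕ) (hd : 2 ≤ d) (α Δ p ε : ℝ) (hΔ : 1 < Δ) (hp : 1 < p)
    (hε : ε = (d : ℝ) - p * (1 + α)) (hε0 : 0 < ε) :
    (∫⁻ x in {x : EuclideanSpace ℝ (Fin d) | ‖x‖ < 1 / Real.exp 1},
              ENNReal.ofReal
                ((‖fderiv ℝ (fun y : EuclideanSpace ℝ (Fin d) => (-Real.log ‖y‖) ^ Δ) x‖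
                    * ‖x‖ ^ (-α)) ^ p)) ^ (1 / p)
    = ENNReal.ofReal (Δ * ((d * volume.real (Metric.ball (0 : EuclideanSpace ℝ (Fin d)) 1)) *
        ∫ v in Ioi ε, Real.exp (-v) * v ^ ((Δ - 1) * p)) ^ (1 / p) *
          ε ^ (-(Δ - 1) - 1 / p)) := by
  have : Nonempty (Fin d) := ⟨⟨0, by omega⟩⟩
  have hΔ0 : 0 < Δ := by linarith
  have hp0 : 0 < p := by linarith
  have hne : ∀ᵐ x : EuclideanSpace ℝ (Fin d), x ≠ 0 := by
    rw [ae_iff]; simp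
  have hms : MeasurableSet {x : EuclideanSpace ℝ (Fin d) | ‖x‖ < 1 / Real.exp 1} :=
    measurableSet_lt measurable_norm measurable_const
  obtain ⟨hi, hv⟩ := aux_one_dim d hd α Δ p ε hΔ hp hε hε0
  have hcongr : ∫⁻ x in {x : EuclideanSpace ℝ (Fin d) | ‖x‖ < 1 / Real.exp 1},
              ENNReal.ofReal
                ((‖fderiv ℝ (fun y : EuclideanSpace ℝ (Fin d) => (-Real.log ‖y‖) ^ Δ) x‖
                    * ‖x‖ ^ (-α)) ^ p)
      = ∫⁻ x in {x : EuclideanSpace ℝ (Fin d) | ‖x‖ < 1 / Real.exp 1},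
              ENNReal.ofReal ((fun r : ℝ =>
                (Δ * (-Real.log r) ^ (Δ - 1) / r * r ^ (-α)) ^ p) ‖x‖) := by
    apply lintegral_congr_ae
    filter_upwards [ae_restrict_mem hms, ae_restrict_of_ae hne] with x hx hx0
    rw [aux_grad d hd Δ hΔ x (norm_pos_iff.mpr hx0) hx]
  have hJ : 0 ≤ ∫ v in Ioi ε, Real.exp (-v) * v ^ ((Δ - 1) * p) := by
    apply setIntegral_nonneg measurableSet_Ioi
    intro v hv
    have : 0 < v := hε0.trans hv
    positivity
  rw [hcongr, aux_polar d hd _ _ _ hi, hv, ENNReal.ofReal_rpow_of_nonneg (by positivity)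
    (by positivity)]
  · congr 1
    set J := ∫ v in Ioi ε, Real.exp (-v) * v ^ ((Δ - 1) * p)
    set σ := (d * volume.real (Metric.ball (0 : EuclideanSpace ℝ (Fin d)) 1))
    have hσ : 0 ≤ σ := by positivity
    have hre : σ * (Δ ^ p * ε ^ (-((Δ - 1) * p) - 1) * J)
        = Δ ^ p * (σ * J) * ε ^ (-((Δ - 1) * p) - 1) := by ring
    rw [hre, Real.mul_rpow (by positivity) (by positivity),
      Real.mul_rpow (by positivity) (by positivity), ← Real.rpow_mul hΔ0.le,
      ← Real.rpow_mul hε0.le, mul_one_div_cancel hp0.ne', Real.rpow_one]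
    congr 2
    field_simp
  · intro r hr
    have h0 : 0 < r := hr.1
    have hlt1 : r < 1 := hr.2.trans_le (by
      rw [div_le_one (Real.exp_pos 1)]; exact Real.one_le_exp zero_le_one)
    have hlog : 0 < -Real.log r := by
      have := Real.log_neg h0 hlt1
      linarith
    positivity

/-- For `d ≥ 2`, `α > −1` with `p₀ = d/(1+α) > 1` and `Δ > 1`, the function
`u(x) = (−log|x|)^Δ` on `0 < |x| < 1/e` satisfies
`|grad u(x)| = Δ(−log|x|)^{Δ−1}/|x|`, and for all `p ∈ (1, p₀)` the weighted norm
`( ∫_{|x|<1/e} (|grad u(x)|·|x|^{−α})^p dx )^{1/p}` is comparable (with constants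
depending only on `d, α, Δ`) to `(d − p(1+α))^{−(Δ−1) − 1/p}`. -/
theorem grad_u_estimate (d : ℕ) (hd : 2 ≤ d) (α Δ : ℝ) (hα : -1 < α)
    (hp₀ : 1 < (d : ℝ) / (1 + α)) (hΔ : 1 < Δ) :
    (∀ x : EuclideanSpace ℝ (Fin d), 0 < ‖x‖ → ‖x‖ < 1 / Real.exp 1 →
      ‖fderiv ℝ (fun y : EuclideanSpace ℝ (Fin d) => (-Real.log ‖y‖) ^ Δ) x‖
        = Δ * (-Real.log ‖x‖) ^ (Δ - 1) / ‖x‖) ∧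
    ∃ c₁ c₂ : ℝ, 0 < c₁ ∧ c₁ ≤ c₂ ∧
      ∀ p : ℝ, 1 < p → p < (d : ℝ) / (1 + α) →
        ENNReal.ofReal (c₁ * ((d : ℝ) - p * (1 + α)) ^ (-(Δ - 1) - 1 / p))
          ≤ (∫⁻ x in {x : EuclideanSpace ℝ (Fin d) | ‖x‖ < 1 / Real.exp 1},
              ENNReal.ofReal
                ((‖fderiv ℝ (fun y : EuclideanSpace ℝ (Fin d) => (-Real.log ‖y‖) ^ Δ) x‖
                    * ‖x‖ ^ (-α)) ^ p)) ^ (1 / p) ∧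
        (∫⁻ x in {x : EuclideanSpace ℝ (Fin d) | ‖x‖ < 1 / Real.exp 1},
              ENNReal.ofReal
                ((‖fderiv ℝ (fun y : EuclideanSpace ℝ (Fin d) => (-Real.log ‖y‖) ^ Δ) x‖
                    * ‖x‖ ^ (-α)) ^ p)) ^ (1 / p)
          ≤ ENNReal.ofReal (c₂ * ((d : ℝ) - p * (1 + α)) ^ (-(Δ - 1) - 1 / p)) := by
  refine ⟨fun x h0 h1 => aux_grad d hd Δ hΔ x h0 h1, ?_⟩
  have : Nonempty (Fin d) := ⟨⟨0, by omega⟩⟩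
  have hα1 : 0 < 1 + α := by linarith
  have hΔ0 : 0 < Δ := by linarith
  have hd1 : (1 : ℝ) ≤ d := by exact_mod_cast (by omega : 1 ≤ d)
  set σ := (d * volume.real (Metric.ball (0 : EuclideanSpace ℝ (Fin d)) 1)) with hσdef
  have hσ : 0 < σ := by
    apply _root_.mul_pos (by linarith : (0 : ℝ) < d)
    rw [measureReal_def]
    exact ENNReal.toReal_pos (Metric.measure_ball_pos volume _ one_pos).ne'
      measure_ball_lt_top.ne
  set S := (Δ - 1) * ((d : ℝ) / (1 + α)) with hSdef
  have hS0 : 0 < S := mul_pos (by linarith) (by linarith)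
  have hΓ : 0 < Real.Gamma (S + 1) := Real.Gamma_pos_of_pos (by linarith)
  have hmin : 0 < min 1 (σ * Real.exp (-d)) := lt_min one_pos (by positivity)
  refine ⟨Δ * min 1 (σ * Real.exp (-d)), Δ * max 1 (σ * (1 + Real.Gamma (S + 1))),
    by positivity, ?_, ?_⟩
  · gcongr
    exact (min_le_left _ _).trans (le_max_left _ _)
  intro p hp1 hp2
  have hp0 : 0 < p := by linarith
  have hlt : p * (1 + α) < d := (lt_div_iff₀ hα1).mp hp2
  have hε0 : 0 < (d : ℝ) - p * (1 + α) := by linarith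
  have hεd : (d : ℝ) - p * (1 + α) ≤ d := by
    have : 0 < p * (1 + α) := by positivity
    linarith
  have hs0 : 0 < (Δ - 1) * p := mul_pos (by linarith) hp0
  have hsS : (Δ - 1) * p ≤ S :=
    mul_le_mul_of_nonneg_left hp2.le (by linarith)
  obtain ⟨hJ1, hJ2⟩ := aux_J _ _ S d hε0 hd1 hεd hs0 hsS
  rw [aux_formula d hd α Δ p _ hΔ hp1 rfl hε0, ← hσdef]
  set J := ∫ v in Ioi ((d : ℝ) - p * (1 + α)), Real.exp (-v) * v ^ ((Δ - 1) * p)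
  have hq0 : 0 < 1 / p := by positivity
  have hq1 : 1 / p ≤ 1 := by rw [div_le_one hp0]; exact hp1.le
  have hJ0 : 0 < J := (Real.exp_pos _).trans_le hJ1
  constructor
  · apply ENNReal.ofReal_le_ofReal
    gcongr
    calc min 1 (σ * Real.exp (-d)) = (min 1 (σ * Real.exp (-d))) ^ (1 : ℝ) :=
          (Real.rpow_one _).symm
      _ ≤ (min 1 (σ * Real.exp (-d))) ^ (1 / p) :=
          Real.rpow_le_rpow_of_exponent_ge hmin (min_le_left _ _) hq1
      _ ≤ (σ * J) ^ (1 / p) := by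
          apply Real.rpow_le_rpow hmin.le _ hq0.le
          exact (min_le_right _ _).trans (by gcongr)
  · apply ENNReal.ofReal_le_ofReal
    gcongr
    calc (σ * J) ^ (1 / p) ≤ (max 1 (σ * (1 + Real.Gamma (S + 1)))) ^ (1 / p) := by
          apply Real.rpow_le_rpow (by positivity) _ hq0.le
          exact le_trans (by gcongr) (le_max_right _ _)
      _ ≤ (max 1 (σ * (1 + Real.Gamma (S + 1)))) ^ (1 : ℝ) :=
          Real.rpow_le_rpow_of_exponent_le (le_max_left _ _) hq1
      _ = _ := Real.rpow_one _
end

section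
/- Let d ≥ 2, α > −1 with p₀ := d/(1+α) > 1, and Δ > 1. Define u(x) = (−log|x|)^Δ for x ∈ ℝ^d with 0 < |x| < 1/e. Then there exist constants 0 < c₁ ≤ c₂ < ∞ (depending only on d, α, Δ) such that for all p ∈ (1, p₀): c₁ · (d − p(1+α))^{−Δ − 1/p} ≤ ( ∫_{|x|<1/e} ( u(x) · |x|^{−1−α} )^p dx )^{1/p} ≤ c₂ · (d − p(1+α))^{−Δ − 1/p}. -/
open MeasureTheory Set ENNReal


/-- Polar coordinates for lower Lebesgue integrals of radial functions. -/
lemma lintegral_radial {E : Type*} [NormedAddCommGroup E] [NormedSpace ℝ E] [MeasurableSpace E]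
    [Nontrivial E] (μ : Measure E) [FiniteDimensional ℝ E] [BorelSpace E] [μ.IsAddHaarMeasure]
    (f : ℝ → ℝ≥0∞) (hf : Measurable f) :
    ∫⁻ x, f ‖x‖ ∂μ = μ.toSphere univ *
      ∫⁻ y in Ioi (0 : ℝ), ENNReal.ofReal (y ^ (Module.finrank ℝ E - 1)) * f y := by
  calc
    ∫⁻ x, f ‖x‖ ∂μ = ∫⁻ x : ({(0)}ᶜ : Set E), f (‖x.1‖) ∂(μ.comap (↑)) := by
      rw [lintegral_subtype_comap (measurableSet_singleton _).compl (fun x ↦ f (‖x‖)),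
        restrict_compl_singleton]
    _ = ∫⁻ x, f x.2 ∂μ.toSphere.prod (.volumeIoiPow (Module.finrank ℝ E - 1)) := by
      simpa using μ.measurePreserving_homeomorphUnitSphereProd.lintegral_comp_emb
        (Homeomorph.measurableEmbedding _) (f ∘ Subtype.val ∘ Prod.snd)
    _ = μ.toSphere univ *
        ∫⁻ x : Ioi (0 : ℝ), f x ∂.volumeIoiPow (Module.finrank ℝ E - 1) := by
      rw [lintegral_prod _ (by fun_prop)]
      simp [mul_comm]
    _ = _ := by
      rw [Measure.volumeIoiPow, lintegral_withDensity_eq_lintegral_mul _ (by fun_prop)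
        (by fun_prop)]
      congr 1
      exact lintegral_subtype_comap measurableSet_Ioi
        (fun y ↦ ENNReal.ofReal (y ^ (Module.finrank ℝ E - 1)) * f y)

lemma image_exp_neg : (fun t : ℝ ↦ Real.exp (-t)) '' Ioi 1 = Ioo 0 (1 / Real.exp 1) := by
  ext r
  simp only [mem_image, mem_Ioi, mem_Ioo]
  rw [one_div, ← Real.exp_neg]
  constructor
  · rintro ⟨t, ht, rfl⟩
    exact ⟨Real.exp_pos _, Real.exp_lt_exp.2 (by linarith)⟩
  · rintro ⟨h0, h1⟩
    refine ⟨-Real.log r, ?_, by simp [Real.exp_log h0]⟩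
    have := (Real.log_lt_iff_lt_exp h0).2 h1
    linarith

/-- Reduction of the weighted integral to an incomplete Gamma integral. -/
lemma weight_integral_eq (d : ℕ) (hd : 2 ≤ d) (α Δ p : ℝ) :
    (∫⁻ x in {x : EuclideanSpace ℝ (Fin d) | ‖x‖ < 1 / Real.exp 1},
        ENNReal.ofReal (((-Real.log ‖x‖) ^ Δ * ‖x‖ ^ (-1 - α)) ^ p)) =
      (volume : Measure (EuclideanSpace ℝ (Fin d))).toSphere univ *
      ∫⁻ t in Ioi (1 : ℝ),
        ENNReal.ofReal (t ^ (Δ * p) * Real.exp (-(((d : ℝ) - p * (1 + α)) * t))) := by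
  haveI : Nonempty (Fin d) := ⟨⟨0, by omega⟩⟩
  set g : ℝ → ℝ≥0∞ := fun r ↦ ENNReal.ofReal (((-Real.log r) ^ Δ * r ^ (-1 - α)) ^ p) with hg
  have hgm : Measurable g := by fun_prop
  have hms : MeasurableSet {x : EuclideanSpace ℝ (Fin d) | ‖x‖ < 1 / Real.exp 1} :=
    measurableSet_lt (by fun_prop) (by fun_prop)
  have h1 : (∫⁻ x in {x : EuclideanSpace ℝ (Fin d) | ‖x‖ < 1 / Real.exp 1}, g ‖x‖) =
      ∫⁻ x : EuclideanSpace ℝ (Fin d), (Iio (1 / Real.exp 1)).indicator g ‖x‖ := by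
    rw [← lintegral_indicator hms]
    rfl
  change (∫⁻ x in {x : EuclideanSpace ℝ (Fin d) | ‖x‖ < 1 / Real.exp 1}, g ‖x‖) = _
  rw [h1, lintegral_radial _ _ (hgm.indicator measurableSet_Iio), finrank_euclideanSpace_fin]
  congr 1
  have h2 : ∫⁻ y in Ioi (0 : ℝ), ENNReal.ofReal (y ^ (d - 1)) *
      (Iio (1 / Real.exp 1)).indicator g y =
      ∫⁻ y in Ioo (0 : ℝ) (1 / Real.exp 1), ENNReal.ofReal (y ^ (d - 1)) * g y := by
    have : (fun y ↦ ENNReal.ofReal (y ^ (d - 1)) * (Iio (1 / Real.exp 1)).indicator g y) =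
        (Iio (1 / Real.exp 1)).indicator (fun y ↦ ENNReal.ofReal (y ^ (d - 1)) * g y) := by
      ext y
      by_cases hy : y ∈ Iio (1 / Real.exp 1) <;> simp [indicator, hy]
    rw [this, lintegral_indicator measurableSet_Iio, Measure.restrict_restrict measurableSet_Iio]
    congr 2
    ext y
    simp [and_comm]
  rw [h2, ← image_exp_neg, lintegral_image_eq_lintegral_abs_deriv_mul (f' := fun t ↦ -Real.exp (-t))
    measurableSet_Ioi]
  · refine setLIntegral_congr_fun measurableSet_Ioi ?_
    intro t ht
    have ht0 : (0 : ℝ) < t := lt_trans one_pos ht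
    simp only [hg, abs_neg, Real.abs_exp, Real.log_exp, neg_neg]
    rw [← ENNReal.ofReal_mul (by positivity), ← ENNReal.ofReal_mul (by positivity)]
    congr 1
    rw [Real.mul_rpow (by positivity) (by positivity), ← Real.rpow_mul ht0.le,
      ← Real.exp_mul, ← Real.exp_mul, ← Real.exp_nat_mul, Nat.cast_sub (by omega)]
    rw [show ∀ a b c e : ℝ, a * (b * (c * e)) = c * (a * b * e) by intros; ring,
      ← Real.exp_add, ← Real.exp_add]
    congr 2
    push_cast
    ring
  · intro t _
    have := ((hasDerivAt_id t).neg).exp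
    simpa using this.hasDerivWithinAt
  · intro a _ b _ hab
    simpa using hab

lemma incomplete_upper (s ε : ℝ) (hs : 0 < s) (hε : 0 < ε) :
    ∫⁻ t in Ioi (1 : ℝ), ENNReal.ofReal (t ^ s * Real.exp (-(ε * t))) ≤
      ENNReal.ofReal (Real.Gamma (s + 1) * ε ^ (-s - 1)) := by
  have key := Real.integral_rpow_mul_exp_neg_mul_Ioi (a := s + 1) (by linarith) hε
  have hG : 0 < Real.Gamma (s + 1) := Real.Gamma_pos_of_pos (by linarith)
  rw [add_sub_cancel_right] at key
  have hint : IntegrableOn (fun t ↦ t ^ s * Real.exp (-(ε * t))) (Ioi 0) :=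
    .of_integral_ne_zero (by rw [key]; positivity)
  calc _ ≤ ∫⁻ t in Ioi (0 : ℝ), ENNReal.ofReal (t ^ s * Real.exp (-(ε * t))) :=
        lintegral_mono_set (Ioi_subset_Ioi zero_le_one)
    _ = ENNReal.ofReal (∫ t in Ioi (0 : ℝ), t ^ s * Real.exp (-(ε * t))) := by
        rw [ofReal_integral_eq_lintegral_ofReal hint]
        refine (ae_restrict_iff' measurableSet_Ioi).2 (ae_of_all _ fun t (ht : 0 < t) ↦ ?_)
        change 0 ≤ t ^ s * Real.exp (-(ε * t))
        positivity
    _ = _ := by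
        rw [key, one_div, Real.inv_rpow hε.le, ← Real.rpow_neg hε.le, mul_comm]
        congr 3
        ring

lemma incomplete_lower (s ε D : ℝ) (hs : 0 < s) (hε : 0 < ε) (hD : 1 ≤ D) (hεD : ε ≤ D) :
    ENNReal.ofReal (Real.exp (-(D + 1)) * ε ^ (-s - 1)) ≤
      ∫⁻ t in Ioi (1 : ℝ), ENNReal.ofReal (t ^ s * Real.exp (-(ε * t))) := by
  have h1 : 1 ≤ D / ε := (one_le_div hε).2 hεD
  calc ENNReal.ofReal (Real.exp (-(D + 1)) * ε ^ (-s - 1))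
      = ∫⁻ t in Ioo (D / ε) ((D + 1) / ε),
          ENNReal.ofReal (ε ^ (-s) * Real.exp (-(D + 1))) := by
        rw [setLIntegral_const, Real.volume_Ioo, ← ENNReal.ofReal_mul (by positivity)]
        congr 1
        rw [Real.rpow_sub hε, Real.rpow_one]
        field_simp
        ring
    _ ≤ ∫⁻ t in Ioo (D / ε) ((D + 1) / ε),
          ENNReal.ofReal (t ^ s * Real.exp (-(ε * t))) := by
        refine setLIntegral_mono' measurableSet_Ioo fun t ht ↦ ENNReal.ofReal_le_ofReal ?_
        have hb : ε * t ≤ D + 1 := by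
          have := (lt_div_iff₀ hε).1 ht.2
          linarith
        have ha : ε⁻¹ ≤ t := by
          refine le_trans ?_ ht.1.le
          rw [inv_eq_one_div]
          gcongr
        have ht0 : 0 < t := lt_of_lt_of_le (inv_pos.2 hε) ha
        rw [Real.rpow_neg hε.le, ← Real.inv_rpow hε.le]
        gcongr
    _ ≤ _ := lintegral_mono_set fun t ht ↦ lt_of_le_of_lt h1 ht.1

/-- For `d ≥ 2`, `α > −1` with `p₀ = d/(1+α) > 1` and `Δ > 1`, the function
`u(x) = (−log|x|)^Δ` on `0 < |x| < 1/e` satisfies: for all `p ∈ (1, p₀)` the weighted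
norm `( ∫_{|x|<1/e} (u(x)·|x|^{−1−α})^p dx )^{1/p}` is comparable (with constants
depending only on `d, α, Δ`) to `(d − p(1+α))^{−Δ − 1/p}`. -/
theorem u_weight_estimate (d : ℕ) (hd : 2 ≤ d) (α Δ : ℝ) (hα : -1 < α)
    (hp₀ : 1 < (d : ℝ) / (1 + α)) (hΔ : 1 < Δ) :
    ∃ c₁ c₂ : ℝ, 0 < c₁ ∧ c₁ ≤ c₂ ∧
      ∀ p : ℝ, 1 < p → p < (d : ℝ) / (1 + α) →
        ENNReal.ofReal (c₁ * ((d : ℝ) - p * (1 + α)) ^ (-Δ - 1 / p))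
          ≤ (∫⁻ x in {x : EuclideanSpace ℝ (Fin d) | ‖x‖ < 1 / Real.exp 1},
              ENNReal.ofReal (((-Real.log ‖x‖) ^ Δ * ‖x‖ ^ (-1 - α)) ^ p)) ^ (1 / p) ∧
        (∫⁻ x in {x : EuclideanSpace ℝ (Fin d) | ‖x‖ < 1 / Real.exp 1},
              ENNReal.ofReal (((-Real.log ‖x‖) ^ Δ * ‖x‖ ^ (-1 - α)) ^ p)) ^ (1 / p)
          ≤ ENNReal.ofReal (c₂ * ((d : ℝ) - p * (1 + α)) ^ (-Δ - 1 / p)) := by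
  haveI : Nonempty (Fin d) := ⟨⟨0, by omega⟩⟩
  have hα' : 0 < 1 + α := by linarith
  set W := (volume : Measure (EuclideanSpace ℝ (Fin d))).toSphere univ with hW
  have hWt : W ≠ ⊤ := measure_ne_top _ _
  have hW0 : W ≠ 0 := by
    rw [hW, Ne, Measure.measure_univ_eq_zero]
    exact Measure.toSphere_ne_zero _
  set w := W.toReal with hw
  have hwpos : 0 < w := ENNReal.toReal_pos hW0 hWt
  have hWw : W = ENNReal.ofReal w := (ENNReal.ofReal_toReal hWt).symm
  set p₀ := (d : ℝ) / (1 + α) with hp0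
  set G := Real.Gamma (Δ * p₀ + 1) with hG
  have hd1 : (1 : ℝ) ≤ d := by exact_mod_cast (by omega : 1 ≤ d)
  set A := w * Real.exp (-((d : ℝ) + 1)) with hA
  have hApos : 0 < A := by positivity
  refine ⟨min 1 A, max 1 (w * G), by positivity, (min_le_left _ _).trans (le_max_left _ _), ?_⟩
  intro p hp1 hpp
  have hp : 0 < p := by linarith
  have hε : 0 < (d : ℝ) - p * (1 + α) := by
    have := (lt_div_iff₀ hα').1 hpp
    linarith
  have hεd : (d : ℝ) - p * (1 + α) ≤ d := by
    have : 0 < p * (1 + α) := by positivity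
    linarith
  rw [weight_integral_eq d hd α Δ p, ← hW, hWw]
  set ε := (d : ℝ) - p * (1 + α) with hεdef
  have hs : 0 < Δ * p := by positivity
  have hpow : ∀ B : ℝ, 0 ≤ B → (ENNReal.ofReal (B * ε ^ (-(Δ * p) - 1))) ^ (1 / p) =
      ENNReal.ofReal (B ^ (1 / p) * ε ^ (-Δ - 1 / p)) := by
    intro B hB
    rw [ENNReal.ofReal_rpow_of_nonneg (by positivity) (by positivity),
      Real.mul_rpow hB (by positivity), ← Real.rpow_mul hε.le]
    congr 3
    field_simp
  have hp' : 1 / p ≤ 1 := by rw [div_le_one hp]; exact hp1.le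
  have hp'' : 0 ≤ 1 / p := by positivity
  constructor
  · have hl := incomplete_lower (Δ * p) ε d hs hε hd1 hεd
    calc ENNReal.ofReal (min 1 A * ε ^ (-Δ - 1 / p))
        ≤ ENNReal.ofReal (A ^ (1 / p) * ε ^ (-Δ - 1 / p)) := by
          apply ENNReal.ofReal_le_ofReal
          gcongr
          rcases le_total 1 A with h | h
          · exact (min_le_left _ _).trans (Real.one_le_rpow h hp'')
          · refine (min_le_right _ _).trans ?_
            simpa using Real.rpow_le_rpow_of_exponent_ge hApos h hp'
      _ = (ENNReal.ofReal (A * ε ^ (-(Δ * p) - 1))) ^ (1 / p) := (hpow A hApos.le).symm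
      _ ≤ _ := by
          gcongr
          rw [hA, mul_assoc, ENNReal.ofReal_mul hwpos.le]
          gcongr
  · have hu := incomplete_upper (Δ * p) ε hs hε
    have hΔp : 1 ≤ Δ * p := by nlinarith
    have hGle : Real.Gamma (Δ * p + 1) ≤ G := by
      have hle : Δ * p + 1 ≤ Δ * p₀ + 1 := by gcongr
      exact Real.Gamma_strictMonoOn_Ici.monotoneOn (by simp only [mem_Ici]; linarith)
        (by simp only [mem_Ici]; linarith) hle
    have hGpos : 0 < G := lt_of_lt_of_le (Real.Gamma_pos_of_pos (by linarith)) hGle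
    calc _ ≤ (ENNReal.ofReal (w * G * ε ^ (-(Δ * p) - 1))) ^ (1 / p) := by
          gcongr
          rw [mul_assoc, ENNReal.ofReal_mul hwpos.le]
          gcongr
          refine hu.trans (ENNReal.ofReal_le_ofReal ?_)
          gcongr
      _ = ENNReal.ofReal ((w * G) ^ (1 / p) * ε ^ (-Δ - 1 / p)) := hpow _ (by positivity)
      _ ≤ _ := by
          apply ENNReal.ofReal_le_ofReal
          gcongr
          rcases le_total 1 (w * G) with h | h
          · refine le_trans ?_ (le_max_right _ _)
            simpa using Real.rpow_le_rpow_of_exponent_le h hp'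
          · exact (Real.rpow_le_one (by positivity) h hp'').trans (le_max_left _ _)
end

section
/- Let d ≥ 2 and α > −1 with p₀ := d/(1+α) > 1. Then there exist a constant C > 0 and a function f : ℝ^d → ℝ, not almost everywhere zero, supported in the closed unit ball B = {x : |x| ≤ 1}, continuously differentiable on B \ {0}, such that for every p ∈ (1, p₀): ( ∫_B ( |f(x)| · |x|^{−1−α} )^p dx )^{1/p} ≥ C · ( p/(d − p(1+α)) ) · ( ∫_B ( |grad f(x)| · |x|^{−α} )^p dx )^{1/p}, with both sides finite. Consequently the constant p/|d − p(1+α)| in the weighted Poincaré inequality cannot be improved as p → p₀ from below. -/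
open MeasureTheory Set ENNReal

/-- The radial one-dimensional integral, computed through `y = exp (-t)`. -/
lemma aux_image : (fun t : ℝ => Real.exp (-t)) '' Ioi 0 = Ioo 0 1 := by
  ext y
  simp only [mem_image, mem_Ioi, mem_Ioo]
  constructor
  · rintro ⟨t, ht, rfl⟩
    exact ⟨Real.exp_pos _, by rw [Real.exp_lt_one_iff]; linarith⟩
  · rintro ⟨h0, h1⟩
    exact ⟨-Real.log y, by have := Real.log_neg h0 h1; linarith, by simp [Real.exp_log h0]⟩

lemma aux_deriv (t : ℝ) (s : Set ℝ) :
    HasDerivWithinAt (fun t : ℝ => Real.exp (-t)) (-Real.exp (-t)) s t := by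
  have := ((hasDerivAt_id t).neg.exp).hasDerivWithinAt (s := s)
  simpa using this

lemma aux_inj : InjOn (fun t : ℝ => Real.exp (-t)) (Ioi 0) := by
  intro a _ b _ h
  simpa using h

lemma aux_pt (s ε : ℝ) (t : ℝ) :
    |-Real.exp (-t)| • ((-Real.log (Real.exp (-t))) ^ s * (Real.exp (-t)) ^ (ε - 1))
      = t ^ ((s + 1) - 1) * Real.exp (-(ε * t)) := by
  rw [abs_neg, abs_of_pos (Real.exp_pos _), Real.log_exp, neg_neg, ← Real.exp_mul, smul_eq_mul]
  have : Real.exp (-(ε * t)) = Real.exp (-t) * Real.exp (-t * (ε - 1)) := by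
    rw [← Real.exp_add]; congr 1; ring
  rw [this]
  have : s + 1 - 1 = s := by ring
  rw [this]; ring

lemma aux_int (s ε : ℝ) (hs : 0 < s) (hε : 0 < ε) :
    IntegrableOn (fun y : ℝ => (-Real.log y) ^ s * y ^ (ε - 1)) (Ioo 0 1) := by
  rw [← aux_image, integrableOn_image_iff_integrableOn_abs_deriv_smul measurableSet_Ioi
    (fun t _ => aux_deriv t _) aux_inj]
  simp only [aux_pt]
  by_contra h
  have h1 := Real.integral_rpow_mul_exp_neg_mul_Ioi (a := s + 1) (r := ε) (by linarith) hε
  rw [integral_undef h] at h1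
  have : 0 < (1 / ε) ^ (s + 1) * Real.Gamma (s + 1) := by
    have := Real.Gamma_pos_of_pos (show 0 < s + 1 by linarith)
    positivity
  linarith

lemma aux_val (s ε : ℝ) (hs : 0 < s) (hε : 0 < ε) :
    ∫ y in Ioo 0 1, (-Real.log y) ^ s * y ^ (ε - 1) = (1 / ε) ^ (s + 1) * Real.Gamma (s + 1) := by
  rw [← aux_image, integral_image_eq_integral_abs_deriv_smul measurableSet_Ioi
    (fun t _ => aux_deriv t _) aux_inj]
  simp only [aux_pt]
  exact Real.integral_rpow_mul_exp_neg_mul_Ioi (a := s + 1) (r := ε) (by linarith) hε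

/-- The radial profile used in the weighted integrals. -/
noncomputable def prof (s q : ℝ) : ℝ → ℝ :=
  indicator (Ioo 0 1) (fun y => (-Real.log y) ^ s * y ^ (-q))

lemma prof_nonneg (s q y : ℝ) : 0 ≤ prof s q y := by
  unfold prof
  refine indicator_nonneg (fun y hy => ?_) y
  have := Real.log_neg hy.1 hy.2
  have h0 := hy.1
  have : 0 ≤ -Real.log y := by linarith
  positivity

lemma prof_mul (d : ℕ) (hd : 2 ≤ d) (s q : ℝ) :
    (fun y : ℝ => y ^ (d - 1) • prof s q y)
      = indicator (Ioo 0 1) (fun y : ℝ => (-Real.log y) ^ s * y ^ (((d : ℝ) - q) - 1)) := by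
  ext y
  by_cases hy : y ∈ Ioo (0 : ℝ) 1
  · simp only [prof, indicator_of_mem hy, smul_eq_mul]
    have h : ((d : ℝ) - q) - 1 = ((d - 1 : ℕ) : ℝ) + (-q) := by
      rw [Nat.cast_sub (by omega)]; push_cast; ring
    rw [h, Real.rpow_add hy.1, Real.rpow_natCast]; ring
  · simp [prof, indicator_of_notMem hy]

lemma aux_d (d : ℕ) (hd : 2 ≤ d) (s q : ℝ) (hs : 0 < s) (hq : q < d) :
    ∫⁻ x : EuclideanSpace ℝ (Fin d), ENNReal.ofReal (prof s q ‖x‖)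
      = ENNReal.ofReal ((d * volume.real (Metric.ball (0 : EuclideanSpace ℝ (Fin d)) 1)) *
          ((1 / ((d : ℝ) - q)) ^ (s + 1) * Real.Gamma (s + 1))) := by
  have : Nonempty (Fin d) := ⟨⟨0, by omega⟩⟩
  have hint : Integrable (fun x : EuclideanSpace ℝ (Fin d) => prof s q ‖x‖) := by
    rw [integrable_fun_norm_addHaar volume (f := prof s q)]
    simp only [finrank_euclideanSpace, Fintype.card_fin]
    rw [prof_mul d hd]
    refine Integrable.integrableOn ?_
    rw [integrable_indicator_iff measurableSet_Ioo]
    exact aux_int s _ hs (by linarith)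
  rw [← ofReal_integral_eq_lintegral_ofReal hint (Filter.Eventually.of_forall
    fun x => prof_nonneg _ _ _)]
  congr 1
  rw [integral_fun_norm_addHaar volume (prof s q)]
  simp only [finrank_euclideanSpace, Fintype.card_fin]
  rw [prof_mul d hd, setIntegral_indicator measurableSet_Ioo,
    show Ioi (0 : ℝ) ∩ Ioo 0 1 = Ioo 0 1 from inter_eq_right.2 (fun y hy => hy.1),
    aux_val s _ hs (by linarith)]
  simp only [nsmul_eq_mul, smul_eq_mul]
  ring

/-- The extremal function: `(-log |x|)^2` inside the unit ball. -/
noncomputable def extF (d : ℕ) (x : EuclideanSpace ℝ (Fin d)) : ℝ :=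
  if ‖x‖ ≤ 1 then (Real.log ‖x‖) ^ 2 else 0

lemma extF_fderiv (d : ℕ) (x : EuclideanSpace ℝ (Fin d)) (h0 : x ≠ 0) (h1 : ‖x‖ < 1) :
    ‖fderiv ℝ (extF d) x‖ = 2 * (-Real.log ‖x‖) * ‖x‖⁻¹ := by
  have hx : 0 < ‖x‖ := norm_pos_iff.2 h0
  have : Nontrivial (EuclideanSpace ℝ (Fin d)) := ⟨x, 0, h0⟩
  have heq : extF d =ᶠ[nhds x] fun y => (Real.log ‖y‖) ^ 2 := by
    have : ∀ᶠ y in nhds x, ‖y‖ < 1 := continuous_norm.continuousAt.eventually_lt_const h1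
    filter_upwards [this] with y hy
    simp [extF, hy.le]
  rw [heq.fderiv_eq]
  have hn : DifferentiableAt ℝ (fun y : EuclideanSpace ℝ (Fin d) => ‖y‖) x :=
    (contDiffAt_norm ℝ h0 (n := 1)).differentiableAt (by norm_num)
  have hφ : HasDerivAt (fun r : ℝ => (Real.log r) ^ 2) (2 * Real.log ‖x‖ * ‖x‖⁻¹) ‖x‖ := by
    have h := (Real.hasDerivAt_log hx.ne').fun_pow 2
    simpa using h
  have := hφ.comp_hasFDerivAt x hn.hasFDerivAt
  have h2 := this.fderiv
  simp only [Function.comp_def] at h2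
  rw [h2, norm_smul, norm_fderiv_norm hn, mul_one, Real.norm_eq_abs, abs_mul, abs_mul,
    abs_of_neg (Real.log_neg hx h1), abs_of_pos (inv_pos.2 hx)]
  norm_num

lemma aux_ae (d : ℕ) (hd : 2 ≤ d) (F : EuclideanSpace ℝ (Fin d) → ℝ) (c s q : ℝ) (hc : 0 ≤ c)
    (hs : 0 < s) (hq : q < d)
    (hF : ∀ x, x ≠ 0 → ‖x‖ < 1 → F x = c * ((-Real.log ‖x‖) ^ s * ‖x‖ ^ (-q))) :
    ∫⁻ x in {x : EuclideanSpace ℝ (Fin d) | ‖x‖ ≤ 1}, ENNReal.ofReal (F x)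
      = ENNReal.ofReal (c * ((d * volume.real (Metric.ball (0 : EuclideanSpace ℝ (Fin d)) 1)) *
          ((1 / ((d : ℝ) - q)) ^ (s + 1) * Real.Gamma (s + 1)))) := by
  have : Nonempty (Fin d) := ⟨⟨0, by omega⟩⟩
  have hm : MeasurableSet {x : EuclideanSpace ℝ (Fin d) | ‖x‖ ≤ 1} :=
    measurableSet_le measurable_norm measurable_const
  rw [ENNReal.ofReal_mul hc, ← aux_d d hd s q hs hq, ← lintegral_const_mul' _ _ ENNReal.ofReal_ne_top,
    ← lintegral_indicator hm]
  have hz : ∀ᵐ x : EuclideanSpace ℝ (Fin d), x ≠ 0 := by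
    simp [ae_iff]
  have hsph : ∀ᵐ x : EuclideanSpace ℝ (Fin d), ‖x‖ ≠ 1 := by
    have := Measure.addHaar_sphere (volume : Measure (EuclideanSpace ℝ (Fin d))) 0 1
    simpa [ae_iff, Metric.sphere] using this
  refine lintegral_congr_ae ?_
  filter_upwards [hz, hsph] with x h0 h1
  have hx : 0 < ‖x‖ := norm_pos_iff.2 h0
  by_cases h : ‖x‖ ≤ 1
  · have hlt := lt_of_le_of_ne h h1
    rw [indicator_of_mem (show x ∈ {x : EuclideanSpace ℝ (Fin d) | ‖x‖ ≤ 1} from h),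
      hF x h0 hlt, ENNReal.ofReal_mul hc, prof, indicator_of_mem (show ‖x‖ ∈ Ioo (0 : ℝ) 1 from ⟨hx, hlt⟩)]
  · rw [indicator_of_notMem (show x ∉ {x : EuclideanSpace ℝ (Fin d) | ‖x‖ ≤ 1} from h),
      prof, indicator_of_notMem (show ‖x‖ ∉ Ioo (0 : ℝ) 1 from fun hh => h hh.2.le)]
    simp

/-- Theorem 2.a (sharpness, bounded case): for `d ≥ 2` and `α > −1` with
`p₀ = d/(1+α) > 1`, there exist a constant `C > 0` and a function `f`, not a.e. zero,
supported in the closed unit ball `B`, continuously differentiable on `B \ {0}`,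
such that for every `p ∈ (1, p₀)`,
`( ∫_B (|f(x)|·|x|^{−1−α})^p dx )^{1/p}
   ≥ C·(p/(d − p(1+α)))·( ∫_B (|grad f(x)|·|x|^{−α})^p dx )^{1/p}`,
with both sides finite: the constant `p/|d − p(1+α)|` in the weighted Poincaré
inequality cannot be improved as `p → p₀⁻`. -/
theorem poincare_sharp_bounded (d : ℕ) (hd : 2 ≤ d) (α : ℝ) (hα : -1 < α)
    (hp₀ : 1 < (d : ℝ) / (1 + α)) :
    ∃ C : ℝ, 0 < C ∧
    ∃ f : EuclideanSpace ℝ (Fin d) → ℝ,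
      ¬ (f =ᵐ[volume] 0) ∧
      (∀ x : EuclideanSpace ℝ (Fin d), 1 < ‖x‖ → f x = 0) ∧
      ContDiffOn ℝ 1 f ({x : EuclideanSpace ℝ (Fin d) | ‖x‖ ≤ 1} \ {0}) ∧
      ∀ p : ℝ, 1 < p → p < (d : ℝ) / (1 + α) →
        (∫⁻ x in {x : EuclideanSpace ℝ (Fin d) | ‖x‖ ≤ 1},
            ENNReal.ofReal ((|f x| * ‖x‖ ^ (-1 - α)) ^ p)) ^ (1 / p) ≠ ⊤ ∧
        (∫⁻ x in {x : EuclideanSpace ℝ (Fin d) | ‖x‖ ≤ 1},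
            ENNReal.ofReal ((‖fderiv ℝ f x‖ * ‖x‖ ^ (-α)) ^ p)) ^ (1 / p) ≠ ⊤ ∧
        ENNReal.ofReal (C * (p / ((d : ℝ) - p * (1 + α)))) *
            (∫⁻ x in {x : EuclideanSpace ℝ (Fin d) | ‖x‖ ≤ 1},
              ENNReal.ofReal ((‖fderiv ℝ f x‖ * ‖x‖ ^ (-α)) ^ p)) ^ (1 / p)
          ≤ (∫⁻ x in {x : EuclideanSpace ℝ (Fin d) | ‖x‖ ≤ 1},
              ENNReal.ofReal ((|f x| * ‖x‖ ^ (-1 - α)) ^ p)) ^ (1 / p) := by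
  have h1α : 0 < 1 + α := by linarith
  have hdR : (0 : ℝ) < d := by positivity
  set p₀ : ℝ := (d : ℝ) / (1 + α) with hp₀def
  have : Nonempty (Fin d) := ⟨⟨0, by omega⟩⟩
  have hp₀pos : 0 < p₀ := by linarith
  refine ⟨1 / (2 * p₀), by positivity, extF d, ?_, ?_, ?_, ?_⟩
  · intro h
    have hopen : IsOpen (Metric.ball (0 : EuclideanSpace ℝ (Fin d)) 1 \ {0}) :=
      Metric.isOpen_ball.sdiff isClosed_singleton
    have hpos : 0 < volume (Metric.ball (0 : EuclideanSpace ℝ (Fin d)) 1 \ {0}) := by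
      rw [measure_sdiff_null (by simp)]
      exact Metric.measure_ball_pos _ _ one_pos
    have hzero : volume (Metric.ball (0 : EuclideanSpace ℝ (Fin d)) 1 \ {0}) = 0 := by
      refine measure_mono_null ?_ (ae_iff.1 h)
      rintro x ⟨hx1, hx0⟩
      have hx1' : ‖x‖ < 1 := by simpa using hx1
      have hx : 0 < ‖x‖ := norm_pos_iff.2 hx0
      have := Real.log_neg hx hx1'
      simp only [mem_ofPred_eq, extF, hx1'.le, if_true, Pi.zero_apply]
      exact pow_ne_zero 2 this.ne
    exact hpos.ne' hzero
  · intro x hx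
    simp [extF, not_le.2 hx]
  · have : ContDiffOn ℝ 1 (fun x : EuclideanSpace ℝ (Fin d) => (Real.log ‖x‖) ^ 2)
        ({x : EuclideanSpace ℝ (Fin d) | ‖x‖ ≤ 1} \ {0}) := by
      intro x hx
      have h0 : x ≠ 0 := hx.2
      exact (((contDiffAt_norm ℝ h0).log (norm_ne_zero_iff.2 h0)).pow 2).contDiffWithinAt
    refine this.congr fun x hx => ?_
    have : ‖x‖ ≤ 1 := hx.1
    simp [extF, this]
  · intro p hp1 hpp
    have hp0 : 0 < p := by linarith
    have hq : p * (1 + α) < d := by rwa [hp₀def, lt_div_iff₀ h1α] at hpp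
    set ε : ℝ := (d : ℝ) - p * (1 + α) with hε
    have hεpos : 0 < ε := by linarith
    set K : ℝ := d * volume.real (Metric.ball (0 : EuclideanSpace ℝ (Fin d)) 1) with hK
    have hKpos : 0 ≤ K := by positivity
    have I1 := aux_ae d hd (fun x => (|extF d x| * ‖x‖ ^ (-1 - α)) ^ p) 1 (2 * p) (p * (1 + α))
      zero_le_one (by positivity) hq (by
        intro x h0 h1
        have hx : 0 < ‖x‖ := norm_pos_iff.2 h0
        have hl : 0 ≤ -Real.log ‖x‖ := by have := Real.log_neg hx h1; linarith
        simp only [extF, h1.le, if_true]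
        rw [abs_of_nonneg (sq_nonneg _), Real.mul_rpow (sq_nonneg _) (by positivity),
          ← Real.rpow_mul hx.le, one_mul, Real.rpow_mul hl, Real.rpow_two, neg_sq]
        congr 2; ring)
    have I2 := aux_ae d hd (fun x => (‖fderiv ℝ (extF d) x‖ * ‖x‖ ^ (-α)) ^ p) (2 ^ p) p
      (p * (1 + α)) (by positivity) hp0 hq (by
        intro x h0 h1
        have hx : 0 < ‖x‖ := norm_pos_iff.2 h0
        have hl : 0 ≤ -Real.log ‖x‖ := by have := Real.log_neg hx h1; linarith
        simp only [extF_fderiv d x h0 h1]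
        have e : 2 * (-Real.log ‖x‖) * ‖x‖⁻¹ * ‖x‖ ^ (-α)
            = 2 * ((-Real.log ‖x‖) * ‖x‖ ^ (-(1 + α))) := by
          rw [neg_add, Real.rpow_add hx, Real.rpow_neg_one]; ring
        rw [e, Real.mul_rpow (by norm_num) (by positivity), Real.mul_rpow hl (by positivity),
          ← Real.rpow_mul hx.le]
        congr 3; ring)
    simp only [← hε, ← hK] at I1 I2
    rw [I1, I2]
    have hG1 : 0 < Real.Gamma (p + 1) := Real.Gamma_pos_of_pos (by linarith)
    have hG2 : 0 < Real.Gamma (2 * p + 1) := Real.Gamma_pos_of_pos (by linarith)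
    have hG : Real.Gamma (p + 1) ≤ Real.Gamma (2 * p + 1) :=
      Real.Gamma_strictMonoOn_Ici.monotoneOn (by simp; linarith) (by simp; linarith) (by linarith)
    refine ⟨ENNReal.rpow_ne_top_of_nonneg (by positivity) ENNReal.ofReal_ne_top,
      ENNReal.rpow_ne_top_of_nonneg (by positivity) ENNReal.ofReal_ne_top, ?_⟩
    have hC : 1 / (2 * p₀) * (p / ε) ≤ 1 / 2 * (1 / ε) := by
      have : p / p₀ ≤ 1 := by rw [div_le_one hp₀pos]; exact hpp.le
      have e : 1 / (2 * p₀) * (p / ε) = (p / p₀) * (1 / 2 * (1 / ε)) := by field_simp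
      rw [e]
      exact mul_le_of_le_one_left (by positivity) this
    rw [ENNReal.ofReal_rpow_of_nonneg (by positivity) (by positivity),
      ENNReal.ofReal_rpow_of_nonneg (by positivity) (by positivity),
      ← ENNReal.ofReal_mul (by positivity)]
    apply ENNReal.ofReal_le_ofReal
    refine (mul_le_mul_of_nonneg_right hC (by positivity)).trans ?_
    have e : 1 / 2 * (1 / ε) = ((1 / 2 * (1 / ε)) ^ p) ^ (1 / p) := by
      rw [← Real.rpow_mul (by positivity), mul_one_div_cancel hp0.ne', Real.rpow_one]
    rw [e, ← Real.mul_rpow (by positivity) (by positivity)]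
    refine Real.rpow_le_rpow (by positivity) ?_ (by positivity)
    have e2 : (1 / 2 * (1 / ε)) ^ p * (2 ^ p * (K * ((1 / ε) ^ (p + 1) * Real.Gamma (p + 1))))
        = 1 * (K * ((1 / ε) ^ (2 * p + 1) * Real.Gamma (p + 1))) := by
      have e3 : (1 / ε) ^ (2 * p + 1) = (1 / ε) ^ p * (1 / ε) ^ (p + 1) := by
        rw [← Real.rpow_add (by positivity)]; congr 1; ring
      have e4 : (1 / 2 : ℝ) ^ p * 2 ^ p = 1 := by
        rw [← Real.mul_rpow (by norm_num) (by norm_num)]; norm_num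
      rw [Real.mul_rpow (by norm_num) (by positivity), e3]
      linear_combination (1 / ε) ^ p * (K * ((1 / ε) ^ (p + 1) * Real.Gamma (p + 1))) * e4
    rw [e2]
    gcongr
end

section
/- Let d ≥ 2, α > −1 with p₀ := d/(1+α) > 1, and Δ > 1. Define v(x) = (log|x|)^Δ for x ∈ ℝ^d with |x| > e. Then there exist constants 0 < c₁ ≤ c₂ < ∞ (depending only on d, α, Δ) such that for all p ∈ (p₀, ∞): c₁ · p^{Δ−1}/(p(1+α) − d)^{(Δ−1) + 1/p} ≤ ( ∫_{|x|>e} ( |grad v(x)| · |x|^{−α} )^p dx )^{1/p} ≤ c₂ · p^{Δ−1}/(p(1+α) − d)^{(Δ−1) + 1/p}. -/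
open MeasureTheory Set ENNReal

/-- Integral of a pure power of the norm outside of a ball. -/
lemma aux_pow_lintegral (d : ℕ) (hd : 2 ≤ d) (s R : ℝ) (hs : 0 < s) (hR : 0 < R) :
    ∫⁻ x in {x : EuclideanSpace ℝ (Fin d) | R < ‖x‖}, ENNReal.ofReal (‖x‖ ^ (-s - d))
      = ENNReal.ofReal
        ((d * (volume : Measure (EuclideanSpace ℝ (Fin d))).real (Metric.ball 0 1))
          * (R ^ (-s) / s)) := by
  have : Nonempty (Fin d) := ⟨⟨0, by omega⟩⟩
  have hms : MeasurableSet {x : EuclideanSpace ℝ (Fin d) | R < ‖x‖} :=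
    measurableSet_lt measurable_const measurable_norm
  set f : ℝ → ℝ := (Ioi R).indicator (fun r => r ^ (-s - d)) with hf
  have hfin : Module.finrank ℝ (EuclideanSpace ℝ (Fin d)) = d := by simp
  have key : EqOn (fun y : ℝ => y ^ (d - 1) • f y)
      ((Ioi R).indicator (fun r => r ^ (-s - 1))) (Ioi 0) := by
    intro y hy
    have hy : 0 < y := hy
    by_cases h : y ∈ Ioi R
    · simp only [hf, indicator_of_mem h, smul_eq_mul]
      rw [← Real.rpow_natCast, ← Real.rpow_add hy]
      congr 1
      rw [Nat.cast_sub (by omega)]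
      push_cast
      ring
    · simp [hf, indicator_of_notMem h]
  have hsub : Ioi R ⊆ Ioi (0 : ℝ) := Ioi_subset_Ioi hR.le
  have hint : Integrable (fun x : EuclideanSpace ℝ (Fin d) => f ‖x‖) volume := by
    rw [integrable_fun_norm_addHaar, hfin, integrableOn_congr_fun key measurableSet_Ioi,
      integrableOn_indicator_iff measurableSet_Ioi]
    rw [inter_eq_left.2 hsub]
    exact integrableOn_Ioi_rpow_of_lt (by linarith) hR
  have hval : ∫ x : EuclideanSpace ℝ (Fin d), f ‖x‖
      = (d * (volume : Measure (EuclideanSpace ℝ (Fin d))).real (Metric.ball 0 1))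
          * (R ^ (-s) / s) := by
    rw [integral_fun_norm_addHaar, hfin, setIntegral_congr_fun measurableSet_Ioi key,
      setIntegral_indicator measurableSet_Ioi, inter_eq_right.2 hsub,
      integral_Ioi_rpow_of_lt (by linarith) hR]
    simp only [nsmul_eq_mul, smul_eq_mul]
    have : -s - 1 + 1 = -s := by ring
    rw [this, neg_div_neg_eq]
    ring
  rw [← hval, ofReal_integral_eq_lintegral_ofReal hint, ← lintegral_indicator hms]
  · congr 1
    ext x
    by_cases h : R < ‖x‖
    · simp [hf, indicator, h]
    · simp [hf, indicator, h]
  · refine Filter.Eventually.of_forall fun x => ?_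
    simp only [hf]
    exact indicator_nonneg (fun r hr => Real.rpow_nonneg (hR.trans hr).le _) _

/-- Norm of the gradient of `(log ‖x‖) ^ Δ`. -/
lemma aux_fderiv (d : ℕ) (Δ : ℝ) (hΔ : 1 < Δ) (x : EuclideanSpace ℝ (Fin d))
    (hx : Real.exp 1 < ‖x‖) :
    ‖fderiv ℝ (fun y : EuclideanSpace ℝ (Fin d) => (Real.log ‖y‖) ^ Δ) x‖
      = Δ * Real.log ‖x‖ ^ (Δ - 1) * ‖x‖⁻¹ := by
  have hr : 0 < ‖x‖ := (Real.exp_pos 1).trans hx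
  have hx0 : x ≠ 0 := norm_pos_iff.1 hr
  have hlog : 1 < Real.log ‖x‖ := (Real.lt_log_iff_exp_lt hr).2 hx
  have h1 : HasDerivAt (fun r : ℝ => Real.log r ^ Δ)
      (‖x‖⁻¹ * Δ * Real.log ‖x‖ ^ (Δ - 1)) ‖x‖ :=
    (Real.hasDerivAt_log hr.ne').rpow_const (Or.inl (by linarith))
  have h2 : DifferentiableAt ℝ (fun y : EuclideanSpace ℝ (Fin d) => ‖y‖) x :=
    differentiableAt_id.norm ℝ hx0
  have h3 := (h1.comp_hasFDerivAt x h2.hasFDerivAt).fderiv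
  have h4 : ‖fderiv ℝ (fun y : EuclideanSpace ℝ (Fin d) => ‖y‖) x‖ = 1 := by
    have : Nontrivial (EuclideanSpace ℝ (Fin d)) := ⟨⟨x, 0, hx0⟩⟩
    exact norm_fderiv_norm h2
  have h5 : (fun y : EuclideanSpace ℝ (Fin d) => (Real.log ‖y‖) ^ Δ)
    = (fun r : ℝ => Real.log r ^ Δ) ∘ (fun y : EuclideanSpace ℝ (Fin d) => ‖y‖) := rfl
  rw [h5, h3, norm_smul, h4, mul_one, Real.norm_of_nonneg (by positivity)]
  ring

/-- Pointwise form of the integrand. -/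
lemma aux_integrand (d : ℕ) (α Δ p : ℝ) (hΔ : 1 < Δ) (x : EuclideanSpace ℝ (Fin d))
    (hx : Real.exp 1 < ‖x‖) :
    (‖fderiv ℝ (fun y : EuclideanSpace ℝ (Fin d) => (Real.log ‖y‖) ^ Δ) x‖ * ‖x‖ ^ (-α)) ^ p
      = (Δ * Real.log ‖x‖ ^ (Δ - 1)) ^ p * ‖x‖ ^ (-(p * (1 + α) - d) - d) := by
  have hr : 0 < ‖x‖ := (Real.exp_pos 1).trans hx
  have hlog : 1 < Real.log ‖x‖ := (Real.lt_log_iff_exp_lt hr).2 hx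
  rw [aux_fderiv d Δ hΔ x hx, mul_assoc, ← Real.rpow_neg_one, ← Real.rpow_add hr,
    Real.mul_rpow (by positivity) (by positivity), ← Real.rpow_mul hr.le]
  congr 2
  ring

lemma aux_root (A W s p : ℝ) (hA : 0 < A) (hW : 0 < W) (hs : 0 < s) (hp : 0 < p) :
    (ENNReal.ofReal (A ^ p * (W / s))) ^ (1 / p)
      = ENNReal.ofReal (A * (W ^ (1 / p) / s ^ (1 / p))) := by
  rw [ENNReal.ofReal_rpow_of_pos (by positivity), Real.mul_rpow (by positivity) (by positivity),
    ← Real.rpow_mul hA.le, Real.div_rpow hW.le hs.le, mul_one_div_cancel hp.ne', Real.rpow_one]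

/-- For `d ≥ 2`, `α > −1` with `p₀ = d/(1+α) > 1` and `Δ > 1`, the function
`v(x) = (log|x|)^Δ` on `|x| > e` satisfies: for all `p ∈ (p₀, ∞)` the weighted norm
`( ∫_{|x|>e} (|grad v(x)|·|x|^{−α})^p dx )^{1/p}` is comparable (with constants
depending only on `d, α, Δ`) to `p^{Δ−1}/(p(1+α) − d)^{(Δ−1) + 1/p}`. -/
theorem grad_v_estimate (d : ℕ) (hd : 2 ≤ d) (α Δ : ℝ) (hα : -1 < α)
    (hp₀ : 1 < (d : ℝ) / (1 + α)) (hΔ : 1 < Δ) :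
    ∃ c₁ c₂ : ℝ, 0 < c₁ ∧ c₁ ≤ c₂ ∧
      ∀ p : ℝ, (d : ℝ) / (1 + α) < p →
        ENNReal.ofReal (c₁ * (p ^ (Δ - 1) / (p * (1 + α) - (d : ℝ)) ^ ((Δ - 1) + 1 / p)))
          ≤ (∫⁻ x in {x : EuclideanSpace ℝ (Fin d) | Real.exp 1 < ‖x‖},
              ENNReal.ofReal
                ((‖fderiv ℝ (fun y : EuclideanSpace ℝ (Fin d) => (Real.log ‖y‖) ^ Δ) x‖
                    * ‖x‖ ^ (-α)) ^ p)) ^ (1 / p) ∧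
        (∫⁻ x in {x : EuclideanSpace ℝ (Fin d) | Real.exp 1 < ‖x‖},
              ENNReal.ofReal
                ((‖fderiv ℝ (fun y : EuclideanSpace ℝ (Fin d) => (Real.log ‖y‖) ^ Δ) x‖
                    * ‖x‖ ^ (-α)) ^ p)) ^ (1 / p)
          ≤ ENNReal.ofReal (c₂ * (p ^ (Δ - 1) / (p * (1 + α) - (d : ℝ)) ^ ((Δ - 1) + 1 / p))) := by
  obtain ⟨ω, hω⟩ : ∃ ω : ℝ,
    ω = d * (volume : Measure (EuclideanSpace ℝ (Fin d))).real (Metric.ball 0 1) := ⟨_, rfl⟩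
  have hωpos : 0 < ω := by
    rw [hω]
    have h1 : 0 < (volume : Measure (EuclideanSpace ℝ (Fin d))).real (Metric.ball 0 1) :=
      ENNReal.toReal_pos (Metric.measure_ball_pos _ _ one_pos).ne' measure_ball_lt_top.ne
    have h2 : (0 : ℝ) < d := by exact_mod_cast (by omega : 0 < d)
    positivity
  have hb : 0 < Δ - 1 := by linarith
  have hα' : 0 < 1 + α := by linarith
  have hΔ0 : 0 < Δ := by linarith
  have hms : ∀ R : ℝ, MeasurableSet {x : EuclideanSpace ℝ (Fin d) | R < ‖x‖} := fun R =>
    measurableSet_lt measurable_const measurable_norm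
  refine ⟨Δ * min 1 ω * Real.exp (-(2 + α)),
    max (Δ * min 1 ω * Real.exp (-(2 + α))) (Δ * (2 * (Δ - 1)) ^ (Δ - 1) * max 1 (2 * ω)),
    by positivity, le_max_left _ _, ?_⟩
  intro p hp
  have hp1 : 1 < p := hp₀.trans hp
  have hp0 : 0 < p := by linarith
  have hq0 : 0 < 1 / p := by positivity
  have hq1 : 1 / p ≤ 1 := by rw [div_le_one hp0]; exact hp1.le
  have hs : 0 < p * (1 + α) - d := by
    rw [div_lt_iff₀ hα'] at hp
    linarith
  have hI : ∀ x ∈ {x : EuclideanSpace ℝ (Fin d) | Real.exp 1 < ‖x‖}, 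
      ENNReal.ofReal
                ((‖fderiv ℝ (fun y : EuclideanSpace ℝ (Fin d) => (Real.log ‖y‖) ^ Δ) x‖
                    * ‖x‖ ^ (-α)) ^ p)
      = ENNReal.ofReal ((Δ * Real.log ‖x‖ ^ (Δ - 1)) ^ p
          * ‖x‖ ^ (-(p * (1 + α) - d) - d)) := fun x hx => by
    rw [aux_integrand d α Δ p hΔ x hx]
  rw [setLIntegral_congr_fun (hms _) hI]
  have hsp : (p * (1 + α) - d) / p ≤ 1 + α := by
    rw [div_le_iff₀ hp0]
    have : (0 : ℝ) ≤ d := Nat.cast_nonneg d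
    linarith
  clear hI hp
  generalize p * (1 + α) - (d : ℝ) = s at *
  constructor
  · -- lower bound
    have hR : 0 < Real.exp (1 + p / s) := Real.exp_pos _
    have hA : 0 < Δ * (p / s) ^ (Δ - 1) := by positivity
    have step : ENNReal.ofReal ((Δ * (p / s) ^ (Δ - 1)) ^ p * (ω * Real.exp (-(s + p)) / s))
        ≤ ∫⁻ x in {x : EuclideanSpace ℝ (Fin d) | Real.exp 1 < ‖x‖},
          ENNReal.ofReal ((Δ * Real.log ‖x‖ ^ (Δ - 1)) ^ p * ‖x‖ ^ (-s - d)) := by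
      calc _ = ENNReal.ofReal ((Δ * (p / s) ^ (Δ - 1)) ^ p) *
            ∫⁻ x in {x : EuclideanSpace ℝ (Fin d) | Real.exp (1 + p / s) < ‖x‖},
              ENNReal.ofReal (‖x‖ ^ (-s - d)) := by
            rw [aux_pow_lintegral d hd s _ hs hR, ← hω, ← ENNReal.ofReal_mul (by positivity),
              ← Real.exp_mul, mul_div_assoc]
            congr 5
            field_simp
        _ = ∫⁻ x in {x : EuclideanSpace ℝ (Fin d) | Real.exp (1 + p / s) < ‖x‖},
              ENNReal.ofReal ((Δ * (p / s) ^ (Δ - 1)) ^ p * ‖x‖ ^ (-s - d)) := by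
            rw [← lintegral_const_mul' _ _ ENNReal.ofReal_ne_top]
            congr 1
            ext x
            rw [ENNReal.ofReal_mul (by positivity)]
        _ ≤ ∫⁻ x in {x : EuclideanSpace ℝ (Fin d) | Real.exp (1 + p / s) < ‖x‖},
              ENNReal.ofReal ((Δ * Real.log ‖x‖ ^ (Δ - 1)) ^ p * ‖x‖ ^ (-s - d)) := by
            refine setLIntegral_mono' (hms _) fun x hx => ENNReal.ofReal_le_ofReal ?_
            have hr : 0 < ‖x‖ := hR.trans hx
            have hlog : 1 + p / s < Real.log ‖x‖ := (Real.lt_log_iff_exp_lt hr).2 hx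
            have : p / s ≤ Real.log ‖x‖ := by linarith
            gcongr
        _ ≤ _ := by
            refine lintegral_mono_set fun x hx => ?_
            refine lt_of_le_of_lt (Real.exp_le_exp.2 ?_) hx
            have : 0 < p / s := by positivity
            linarith
    refine le_trans ?_ (ENNReal.rpow_le_rpow step hq0.le)
    rw [aux_root _ _ _ _ hA (by positivity) hs hp0]
    apply ENNReal.ofReal_le_ofReal
    rw [Real.div_rpow hp0.le hs.le, Real.rpow_add hs, Real.mul_rpow hωpos.le (Real.exp_pos _).le,
      ← Real.exp_mul]
    have e1 : min 1 ω ≤ ω ^ (1 / p) := by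
      rcases le_total 1 ω with h | h
      · exact (min_le_left _ _).trans (Real.one_le_rpow h hq0.le)
      · refine (min_le_right _ _).trans ?_
        simpa using Real.rpow_le_rpow_of_exponent_ge hωpos h hq1
    have e2 : Real.exp (-(2 + α)) ≤ Real.exp (-(s + p) * (1 / p)) := by
      apply Real.exp_le_exp.2
      have : -(s + p) * (1 / p) = -(s / p) - 1 := by field_simp; ring
      rw [this]
      linarith
    calc Δ * min 1 ω * Real.exp (-(2 + α)) * (p ^ (Δ - 1) / (s ^ (Δ - 1) * s ^ (1 / p)))
        ≤ Δ * ω ^ (1 / p) * Real.exp (-(s + p) * (1 / p))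
            * (p ^ (Δ - 1) / (s ^ (Δ - 1) * s ^ (1 / p))) := by gcongr
      _ = _ := by field_simp
  · -- upper bound
    have hA : 0 < Δ * (2 * (Δ - 1) * p / s) ^ (Δ - 1) := by positivity
    have step : ∫⁻ x in {x : EuclideanSpace ℝ (Fin d) | Real.exp 1 < ‖x‖},
          ENNReal.ofReal ((Δ * Real.log ‖x‖ ^ (Δ - 1)) ^ p * ‖x‖ ^ (-s - d))
        ≤ ENNReal.ofReal ((Δ * (2 * (Δ - 1) * p / s) ^ (Δ - 1)) ^ p * (2 * ω / s)) := by
      calc _ ≤ ∫⁻ x in {x : EuclideanSpace ℝ (Fin d) | Real.exp 1 < ‖x‖},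
            ENNReal.ofReal ((Δ * (2 * (Δ - 1) * p / s) ^ (Δ - 1)) ^ p * ‖x‖ ^ (-(s / 2) - d)) := by
            refine setLIntegral_mono' (hms _) fun x hx => ENNReal.ofReal_le_ofReal ?_
            have hr : 0 < ‖x‖ := (Real.exp_pos 1).trans hx
            have hlog : 1 < Real.log ‖x‖ := (Real.lt_log_iff_exp_lt hr).2 hx
            have hε : 0 < s / (2 * (Δ - 1) * p) := by positivity
            have h1 : Real.log ‖x‖
                ≤ (2 * (Δ - 1) * p / s) * ‖x‖ ^ (s / (2 * (Δ - 1) * p)) := by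
              refine (Real.log_le_rpow_div hr.le hε).trans (le_of_eq ?_)
              rw [div_div_eq_mul_div]
              ring
            calc (Δ * Real.log ‖x‖ ^ (Δ - 1)) ^ p * ‖x‖ ^ (-s - d)
                ≤ (Δ * ((2 * (Δ - 1) * p / s) * ‖x‖ ^ (s / (2 * (Δ - 1) * p))) ^ (Δ - 1)) ^ p
                    * ‖x‖ ^ (-s - d) := by gcongr
              _ = _ := by
                  rw [Real.mul_rpow (x := 2 * (Δ - 1) * p / s) (by positivity) (by positivity), ← mul_assoc,
                    Real.mul_rpow hA.le (by positivity), ← Real.rpow_mul hr.le,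
                    ← Real.rpow_mul hr.le, mul_assoc, ← Real.rpow_add hr]
                  congr 2
                  field_simp
                  ring
        _ = ENNReal.ofReal ((Δ * (2 * (Δ - 1) * p / s) ^ (Δ - 1)) ^ p) *
            ∫⁻ x in {x : EuclideanSpace ℝ (Fin d) | Real.exp 1 < ‖x‖},
              ENNReal.ofReal (‖x‖ ^ (-(s / 2) - d)) := by
            rw [← lintegral_const_mul' _ _ ENNReal.ofReal_ne_top]
            congr 1
            ext x
            rw [ENNReal.ofReal_mul (by positivity)]
        _ ≤ _ := by
            rw [aux_pow_lintegral d hd (s / 2) _ (by positivity) (Real.exp_pos 1), ← hω,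
              ← ENNReal.ofReal_mul (by positivity)]
            apply ENNReal.ofReal_le_ofReal
            have h1 : Real.exp 1 ^ (-(s / 2)) ≤ 1 := by
              rw [← Real.exp_mul]
              apply Real.exp_le_one_iff.2
              linarith
            calc (Δ * (2 * (Δ - 1) * p / s) ^ (Δ - 1)) ^ p
                    * (ω * (Real.exp 1 ^ (-(s / 2)) / (s / 2)))
                ≤ (Δ * (2 * (Δ - 1) * p / s) ^ (Δ - 1)) ^ p * (ω * (1 / (s / 2))) := by gcongr
              _ = _ := by field_simp
    refine le_trans (ENNReal.rpow_le_rpow step hq0.le) ?_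
    rw [aux_root _ _ _ _ hA (by positivity) hs hp0]
    apply ENNReal.ofReal_le_ofReal
    have e1 : (2 * ω) ^ (1 / p) ≤ max 1 (2 * ω) := by
      rcases le_total 1 (2 * ω) with h | h
      · refine le_trans ?_ (le_max_right _ _)
        simpa using Real.rpow_le_rpow_of_exponent_le h hq1
      · exact (Real.rpow_le_one (by positivity) h hq0.le).trans (le_max_left _ _)
    rw [Real.div_rpow (by positivity) hs.le, Real.mul_rpow (by positivity) hp0.le,
      Real.rpow_add hs]
    calc Δ * ((2 * (Δ - 1)) ^ (Δ - 1) * p ^ (Δ - 1) / s ^ (Δ - 1))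
            * ((2 * ω) ^ (1 / p) / s ^ (1 / p))
        = Δ * (2 * (Δ - 1)) ^ (Δ - 1) * (2 * ω) ^ (1 / p)
            * (p ^ (Δ - 1) / (s ^ (Δ - 1) * s ^ (1 / p))) := by field_simp
      _ ≤ Δ * (2 * (Δ - 1)) ^ (Δ - 1) * max 1 (2 * ω)
            * (p ^ (Δ - 1) / (s ^ (Δ - 1) * s ^ (1 / p))) := by gcongr
      _ ≤ _ := by
          gcongr
          exact le_max_right _ _
end

section
/- Let d ≥ 2, α > −1 with p₀ := d/(1+α) > 1, and Δ > 1. Define v(x) = (log|x|)^Δ for x ∈ ℝ^d with |x| > e. Then there exist constants 0 < c₁ ≤ c₂ < ∞ (depending only on d, α, Δ) such that for all p ∈ (p₀, ∞): c₁ · p^{Δ}/(p(1+α) − d)^{Δ + 1/p} ≤ ( ∫_{|x|>e} ( v(x) · |x|^{−1−α} )^p dx )^{1/p} ≤ c₂ · p^{Δ}/(p(1+α) − d)^{Δ + 1/p}. -/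
open MeasureTheory Set ENNReal

lemma tail_aux (d : ℕ) (hd : 2 ≤ d) (s R : ℝ) (hs : 0 < s) (hR : 0 < R) :
    ∫⁻ x in {x : EuclideanSpace ℝ (Fin d) | R < ‖x‖}, ENNReal.ofReal (‖x‖ ^ (-(d : ℝ) - s))
      = ENNReal.ofReal ((d * volume.real (Metric.ball (0 : EuclideanSpace ℝ (Fin d)) 1))
          * R ^ (-s) / s) := by
  haveI : Nontrivial (EuclideanSpace ℝ (Fin d)) := by
    haveI : Nonempty (Fin d) := ⟨⟨0, by omega⟩⟩
    infer_instance
  have hmeas : MeasurableSet {x : EuclideanSpace ℝ (Fin d) | R < ‖x‖} :=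
    measurableSet_lt measurable_const measurable_norm
  set f : ℝ → ℝ := (Ioi R).indicator (fun r => r ^ (-(d : ℝ) - s)) with hf
  have hfin : Module.finrank ℝ (EuclideanSpace ℝ (Fin d)) = d := by simp
  have hcongr : ∀ y ∈ Ioi (0 : ℝ), y ^ (d - 1) • f y = (Ioi R).indicator (fun r => r ^ (-1 - s)) y := by
    intro y hy
    have hy0 : (0 : ℝ) < y := hy
    by_cases h : R < y
    · simp only [hf, indicator, mem_Ioi, h, if_true, smul_eq_mul]
      rw [← Real.rpow_natCast, ← Real.rpow_add hy0]
      congr 1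
      push_cast [Nat.cast_sub (show 1 ≤ d by omega)]
      ring
    · simp [hf, indicator, h]
  have hint1 : IntegrableOn (fun r : ℝ => r ^ (-1 - s)) (Ioi R) :=
    integrableOn_Ioi_rpow_of_lt (by linarith) hR
  have hint : Integrable (fun x : EuclideanSpace ℝ (Fin d) => f ‖x‖) := by
    rw [integrable_fun_norm_addHaar volume (f := f), hfin,
      integrableOn_congr_fun hcongr measurableSet_Ioi]
    exact ((integrable_indicator_iff measurableSet_Ioi).2 hint1).integrableOn
  have hval : ∫ x : EuclideanSpace ℝ (Fin d), f ‖x‖ =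
      (d * volume.real (Metric.ball (0 : EuclideanSpace ℝ (Fin d)) 1)) * R ^ (-s) / s := by
    rw [integral_fun_norm_addHaar volume f, hfin, setIntegral_congr_fun measurableSet_Ioi hcongr,
      setIntegral_indicator measurableSet_Ioi, Ioi_inter_Ioi, max_eq_right hR.le,
      integral_Ioi_rpow_of_lt (by linarith) hR, nsmul_eq_mul, smul_eq_mul]
    rw [show -1 - s + 1 = -s by ring, neg_div_neg_eq]
    ring
  rw [← hval, ofReal_integral_eq_lintegral_ofReal hint, ← lintegral_indicator hmeas]
  · refine lintegral_congr fun x => ?_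
    by_cases h : R < ‖x‖ <;> simp [hf, indicator, h]
  · refine Filter.Eventually.of_forall fun x => ?_
    simp only [hf]
    exact indicator_nonneg (fun r hr => Real.rpow_nonneg (hR.trans hr).le _) _

lemma alg_aux (q p s M Δ : ℝ) (hq : 0 < q) (hp : 0 < p) (hs : 0 < s) (hM : 0 < M) :
    ((q * p / s) ^ (Δ * p) * (M / s)) ^ (1 / p)
      = q ^ Δ * M ^ (1 / p) * (p ^ Δ / s ^ (Δ + 1 / p)) := by
  rw [Real.mul_rpow (by positivity) (by positivity), ← Real.rpow_mul (by positivity),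
    show Δ * p * (1 / p) = Δ by field_simp, Real.div_rpow (by positivity) hs.le,
    Real.mul_rpow hq.le hp.le, Real.div_rpow hM.le hs.le, Real.rpow_add hs]
  field_simp

open MeasureTheory Set ENNReal

/-- For `d ≥ 2`, `α > −1` with `p₀ = d/(1+α) > 1` and `Δ > 1`, the function
`v(x) = (log|x|)^Δ` on `|x| > e` satisfies: for all `p ∈ (p₀, ∞)` the weighted norm
`( ∫_{|x|>e} (v(x)·|x|^{−1−α})^p dx )^{1/p}` is comparable (with constants
depending only on `d, α, Δ`) to `p^Δ/(p(1+α) − d)^{Δ + 1/p}`. -/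
theorem v_weight_estimate (d : ℕ) (hd : 2 ≤ d) (α Δ : ℝ) (hα : -1 < α)
    (hp₀ : 1 < (d : ℝ) / (1 + α)) (hΔ : 1 < Δ) :
    ∃ c₁ c₂ : ℝ, 0 < c₁ ∧ c₁ ≤ c₂ ∧
      ∀ p : ℝ, (d : ℝ) / (1 + α) < p →
        ENNReal.ofReal (c₁ * (p ^ Δ / (p * (1 + α) - (d : ℝ)) ^ (Δ + 1 / p)))
          ≤ (∫⁻ x in {x : EuclideanSpace ℝ (Fin d) | Real.exp 1 < ‖x‖},
              ENNReal.ofReal (((Real.log ‖x‖) ^ Δ * ‖x‖ ^ (-1 - α)) ^ p)) ^ (1 / p) ∧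
        (∫⁻ x in {x : EuclideanSpace ℝ (Fin d) | Real.exp 1 < ‖x‖},
              ENNReal.ofReal (((Real.log ‖x‖) ^ Δ * ‖x‖ ^ (-1 - α)) ^ p)) ^ (1 / p)
          ≤ ENNReal.ofReal (c₂ * (p ^ Δ / (p * (1 + α) - (d : ℝ)) ^ (Δ + 1 / p))) := by
  have hβ : 0 < 1 + α := by linarith
  have hΔ0 : 0 < Δ := by linarith
  set K : ℝ := d * volume.real (Metric.ball (0 : EuclideanSpace ℝ (Fin d)) 1) with hK
  have hK0 : 0 < K := by
    have h1 : (0 : ℝ) < d := by exact_mod_cast (by omega : 0 < d)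
    have h2 : 0 < volume.real (Metric.ball (0 : EuclideanSpace ℝ (Fin d)) 1) :=
      ENNReal.toReal_pos (Metric.measure_ball_pos _ _ one_pos).ne' measure_ball_lt_top.ne
    positivity
  have hpt : ∀ p r : ℝ, Real.exp 1 < r → ((Real.log r) ^ Δ * r ^ (-1 - α)) ^ p
      = (Real.log r) ^ (Δ * p) * r ^ (-(d : ℝ) - (p * (1 + α) - d)) := by
    intro p r hr
    have hr0 : 0 < r := (Real.exp_pos 1).trans hr
    have hl : 1 < Real.log r := (Real.lt_log_iff_exp_lt hr0).2 hr
    rw [Real.mul_rpow (by positivity) (by positivity), ← Real.rpow_mul (by positivity),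
      ← Real.rpow_mul hr0.le]
    congr 2
    ring
  refine ⟨(1 + α) ^ Δ * (min 1 K * Real.exp (-(1 + α))),
    max ((1 + α) ^ Δ * (min 1 K * Real.exp (-(1 + α)))) ((2 * Δ) ^ Δ * max 1 (2 * K)),
    by positivity, le_max_left _ _, ?_⟩
  intro p hp
  have hp1 : 1 < p := hp₀.trans hp
  have hp0 : 0 < p := by linarith
  set s := p * (1 + α) - (d : ℝ) with hsdef
  have hs : 0 < s := by
    rw [div_lt_iff₀ hβ] at hp; linarith
  have hip : 0 < 1 / p := by positivity
  have hip1 : 1 / p ≤ 1 := by rw [div_le_one hp0]; exact hp1.le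
  constructor
  · -- lower bound
    have hB : ENNReal.ofReal (((1 + α) * p / s) ^ (Δ * p) * ((K * Real.exp (-(1 + α) * p)) / s))
        ≤ ∫⁻ x in {x : EuclideanSpace ℝ (Fin d) | Real.exp 1 < ‖x‖},
              ENNReal.ofReal (((Real.log ‖x‖) ^ Δ * ‖x‖ ^ (-1 - α)) ^ p) := by
      set R := Real.exp ((1 + α) * p / s) with hR
      have hq1 : 1 ≤ (1 + α) * p / s := by
        rw [one_le_div hs]
        have : (0 : ℝ) ≤ d := Nat.cast_nonneg d
        linarith [mul_comm p (1 + α)]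
      have hRe : Real.exp 1 ≤ R := Real.exp_le_exp.2 hq1
      have hRs : R ^ (-s) = Real.exp (-(1 + α) * p) := by
        rw [hR, ← Real.exp_mul]; congr 1; field_simp
      calc _ = ENNReal.ofReal (((1 + α) * p / s) ^ (Δ * p)) *
            ENNReal.ofReal (K * R ^ (-s) / s) := by
              rw [← ENNReal.ofReal_mul (by positivity), hRs]
        _ = ∫⁻ x in {x : EuclideanSpace ℝ (Fin d) | R < ‖x‖},
              ENNReal.ofReal (((1 + α) * p / s) ^ (Δ * p)) *
                ENNReal.ofReal (‖x‖ ^ (-(d : ℝ) - s)) := by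
              rw [lintegral_const_mul' _ _ ENNReal.ofReal_ne_top,
                tail_aux d hd s R hs (Real.exp_pos _)]
        _ ≤ ∫⁻ x in {x : EuclideanSpace ℝ (Fin d) | R < ‖x‖},
              ENNReal.ofReal (((Real.log ‖x‖) ^ Δ * ‖x‖ ^ (-1 - α)) ^ p) := by
              refine setLIntegral_mono' (measurableSet_lt measurable_const measurable_norm) ?_
              intro x hx
              have hx' : R < ‖x‖ := hx
              rw [hpt p _ (hRe.trans_lt hx'), ← ENNReal.ofReal_mul (by positivity)]
              refine ENNReal.ofReal_le_ofReal ?_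
              refine mul_le_mul_of_nonneg_right ?_ (by positivity)
              refine Real.rpow_le_rpow (by positivity) ?_ (by positivity)
              exact ((Real.lt_log_iff_exp_lt ((Real.exp_pos _).trans hx')).2 hx').le
        _ ≤ _ := lintegral_mono_set fun x hx => hRe.trans_lt hx
    refine le_trans ?_ (ENNReal.rpow_le_rpow hB hip.le)
    rw [ENNReal.ofReal_rpow_of_nonneg (by positivity) hip.le]
    refine ENNReal.ofReal_le_ofReal ?_
    rw [alg_aux _ _ _ _ _ hβ hp0 hs (by positivity)]
    refine mul_le_mul_of_nonneg_right ?_ (by positivity)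
    refine mul_le_mul_of_nonneg_left ?_ (by positivity)
    rw [Real.mul_rpow hK0.le (by positivity), ← Real.exp_mul,
      show -(1 + α) * p * (1 / p) = -(1 + α) by field_simp]
    refine mul_le_mul_of_nonneg_right ?_ (by positivity)
    calc min 1 K = (min 1 K) ^ (1 : ℝ) := (Real.rpow_one _).symm
      _ ≤ (min 1 K) ^ (1 / p) :=
        Real.rpow_le_rpow_of_exponent_ge (by positivity) (min_le_left _ _) hip1
      _ ≤ K ^ (1 / p) := Real.rpow_le_rpow (by positivity) (min_le_right _ _) hip.le
  · -- upper bound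
    have hB : (∫⁻ x in {x : EuclideanSpace ℝ (Fin d) | Real.exp 1 < ‖x‖},
              ENNReal.ofReal (((Real.log ‖x‖) ^ Δ * ‖x‖ ^ (-1 - α)) ^ p))
        ≤ ENNReal.ofReal (((2 * Δ) * p / s) ^ (Δ * p) * ((2 * K) / s)) := by
      calc _ ≤ ∫⁻ x in {x : EuclideanSpace ℝ (Fin d) | Real.exp 1 < ‖x‖},
              ENNReal.ofReal (((2 * Δ) * p / s) ^ (Δ * p)) *
                ENNReal.ofReal (‖x‖ ^ (-(d : ℝ) - s / 2)) := by
              refine setLIntegral_mono' (measurableSet_lt measurable_const measurable_norm) ?_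
              intro x hx
              have hx' : Real.exp 1 < ‖x‖ := hx
              have hx0 : 0 < ‖x‖ := (Real.exp_pos 1).trans hx'
              have hl : 1 < Real.log ‖x‖ := (Real.lt_log_iff_exp_lt hx0).2 hx'
              rw [hpt p _ hx', ← ENNReal.ofReal_mul (by positivity)]
              refine ENNReal.ofReal_le_ofReal ?_
              have h1 : Real.log ‖x‖ ≤ ‖x‖ ^ (s / (2 * Δ * p)) / (s / (2 * Δ * p)) :=
                Real.log_le_rpow_div hx0.le (by positivity)
              have h2 : Real.log ‖x‖ ^ (Δ * p) ≤ (2 * Δ * p / s) ^ (Δ * p) * ‖x‖ ^ (s / 2) := by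
                refine (Real.rpow_le_rpow (by positivity) h1 (by positivity)).trans_eq ?_
                rw [div_eq_mul_inv, inv_div, Real.mul_rpow (by positivity) (by positivity),
                  ← Real.rpow_mul hx0.le, mul_comm]
                congr 2
                field_simp
              refine (mul_le_mul_of_nonneg_right h2 (by positivity)).trans_eq ?_
              rw [mul_assoc, ← Real.rpow_add hx0]
              congr 2
              ring
        _ = ENNReal.ofReal (((2 * Δ) * p / s) ^ (Δ * p)) *
            ENNReal.ofReal (K * (Real.exp 1) ^ (-(s / 2)) / (s / 2)) := by
              rw [lintegral_const_mul' _ _ ENNReal.ofReal_ne_top,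
                tail_aux d hd (s / 2) _ (by positivity) (Real.exp_pos _)]
        _ ≤ _ := by
              rw [← ENNReal.ofReal_mul (by positivity)]
              refine ENNReal.ofReal_le_ofReal ?_
              refine mul_le_mul_of_nonneg_left ?_ (by positivity)
              have h3 : (Real.exp 1) ^ (-(s / 2)) ≤ 1 := by
                rw [← Real.exp_mul]; exact Real.exp_le_one_iff.2 (by linarith)
              rw [show 2 * K / s = K * 1 / (s / 2) by field_simp]
              gcongr
    refine (ENNReal.rpow_le_rpow hB hip.le).trans ?_
    rw [ENNReal.ofReal_rpow_of_nonneg (by positivity) hip.le]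
    refine ENNReal.ofReal_le_ofReal ?_
    rw [alg_aux _ _ _ _ _ (by positivity) hp0 hs (by positivity)]
    refine mul_le_mul_of_nonneg_right ?_ (by positivity)
    refine le_trans ?_ (le_max_right _ _)
    refine mul_le_mul_of_nonneg_left ?_ (by positivity)
    calc (2 * K) ^ (1 / p) ≤ (max 1 (2 * K)) ^ (1 / p) :=
          Real.rpow_le_rpow (by positivity) (le_max_right _ _) hip.le
      _ ≤ (max 1 (2 * K)) ^ (1 : ℝ) :=
        Real.rpow_le_rpow_of_exponent_le (le_max_left _ _) hip1
      _ = max 1 (2 * K) := Real.rpow_one _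
end

section
/- Let D ⊆ ℝ^d be measurable, let (a,b) and (a',b') be intervals with 1 ≤ a < b ≤ ∞, 1 ≤ a' < b' ≤ ∞, let ψ be a continuous positive function on (a',b'), and let S ⊆ (a',b') × (a,b) be a set of admissible index pairs. Let g, h : D → ℝ be measurable and K : S → (0,∞) a function such that for every (p,q) ∈ S one has |g|_{q,D} ≤ K(p,q) · |h|_{p,D}, and assume that for every q ∈ (a,b) there is at least one p with (p,q) ∈ S. Define ν(q) = inf{ K(p,q) · ψ(p) : (p,q) ∈ S }. Then sup_{q∈(a,b)} |g|_{q,D}/ν(q) ≤ sup_{p∈(a',b')} |h|_{p,D}/ψ(p). In particular, for the variable-exponent weighted Poincaré inequality |g|_q ≤ C·|q − p(1+α)|^{−1 + 1/(p(1+α)) − 1/q}·|h|_{p(1+α)} (valid for q > p(1+α)), one obtains ||g||_{G(ν)} ≤ C·||h||_{G(ψ)} with ν(q) = inf_{p(1+α) < q} |q − p(1+α)|^{−1 + 1/(p(1+α)) − 1/q} · ψ(p(1+α)). -/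
open MeasureTheory Set ENNReal

/-- Variable-exponent estimate in Bilateral Grand Lebesgue Spaces: given intervals
`(a,b)` and `(a',b')` (with possibly infinite right endpoints), a continuous positive
function `ψ` on `(a',b')`, a set `S ⊆ (a',b') × (a,b)` of admissible index pairs, and
`K : S → (0,∞)` with `|g|_q ≤ K(p,q)·|h|_p` for all `(p,q) ∈ S`, such that every
`q ∈ (a,b)` admits some `p` with `(p,q) ∈ S`, one has, with
`ν(q) = inf{K(p,q)·ψ(p) : (p,q) ∈ S}`,
`sup_{q∈(a,b)} |g|_q/ν(q) ≤ sup_{p∈(a',b')} |h|_p/ψ(p)`. -/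
theorem bgls_variable_exponent {d : ℕ}
    (D : Set (EuclideanSpace ℝ (Fin d))) (hD : MeasurableSet D)
    (a a' : ℝ) (b b' : ℝ≥0∞) (ha : 1 ≤ a) (hab : ENNReal.ofReal a < b)
    (ha' : 1 ≤ a') (hab' : ENNReal.ofReal a' < b')
    (ψ : ℝ → ℝ)
    (hψc : ContinuousOn ψ {p : ℝ | a' < p ∧ ENNReal.ofReal p < b'})
    (hψpos : ∀ p : ℝ, a' < p → ENNReal.ofReal p < b' → 0 < ψ p)
    (S : Set (ℝ × ℝ))
    (hS : ∀ pq ∈ S, (a' < pq.1 ∧ ENNReal.ofReal pq.1 < b') ∧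
      (a < pq.2 ∧ ENNReal.ofReal pq.2 < b))
    (g h : EuclideanSpace ℝ (Fin d) → ℝ) (hg : Measurable g) (hh : Measurable h)
    (K : ℝ × ℝ → ℝ) (hK : ∀ pq ∈ S, 0 < K pq)
    (hineq : ∀ pq ∈ S, LpNormOn pq.2 D g ≤ ENNReal.ofReal (K pq) * LpNormOn pq.1 D h)
    (hcover : ∀ q : ℝ, a < q → ENNReal.ofReal q < b → ∃ p : ℝ, (p, q) ∈ S) :
    (⨆ q ∈ {q : ℝ | a < q ∧ ENNReal.ofReal q < b},
        LpNormOn q D g /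
          ⨅ p ∈ {p : ℝ | (p, q) ∈ S}, ENNReal.ofReal (K (p, q) * ψ p))
      ≤ ⨆ p ∈ {p : ℝ | a' < p ∧ ENNReal.ofReal p < b'},
          LpNormOn p D h / ENNReal.ofReal (ψ p) := by
  refine iSup₂_le fun q hq => ?_
  set M := ⨆ p ∈ {p : ℝ | a' < p ∧ ENNReal.ofReal p < b'},
          LpNormOn p D h / ENNReal.ofReal (ψ p) with hM
  by_cases hMtop : M = ⊤
  · rw [hMtop]; exact le_top
  apply ENNReal.div_le_of_le_mul
  obtain ⟨p₀, hp₀⟩ := hcover q hq.1 hq.2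
  have this : Nonempty {p : ℝ | (p, q) ∈ S} := ⟨⟨p₀, hp₀⟩⟩
  rw [iInf_subtype', ENNReal.mul_iInf' (fun e => absurd e hMtop) (fun _ => this)]
  refine le_iInf fun ⟨p, hp⟩ => ?_
  have hp' : (p, q) ∈ S := hp
  have hpS := (hS _ hp').1
  have hψ := hψpos p hpS.1 hpS.2
  have h1 : LpNormOn p D h / ENNReal.ofReal (ψ p) ≤ M :=
    le_iSup₂ (f := fun (p : ℝ) (_ : p ∈ {p : ℝ | a' < p ∧ ENNReal.ofReal p < b'}) =>
      LpNormOn p D h / ENNReal.ofReal (ψ p)) p hpS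
  have h2 : LpNormOn p D h ≤ M * ENNReal.ofReal (ψ p) :=
    (ENNReal.div_le_iff (by simpa using hψ) ENNReal.ofReal_ne_top).1 h1
  calc LpNormOn q D g ≤ ENNReal.ofReal (K (p, q)) * LpNormOn p D h := hineq _ hp'
    _ ≤ ENNReal.ofReal (K (p, q)) * (M * ENNReal.ofReal (ψ p)) := by gcongr
    _ = M * ENNReal.ofReal (K (p, q) * ψ p) := by
      rw [ENNReal.ofReal_mul (hK _ hp').le]; ring
end
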